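/- arXiv:2302.08925 — 12 statements merged into one kernel-verified Lean document; each statement's English description precedes it below -/
import Mathlib

section
/- Let m ≥ 1. Let φ : {0,…,m} → ℝ with φ_0 = 0, ψ : {1,…,m} → ℝ, and g : {1,…,m} → ℝ with g_i ≠ 0 for all i. Set η_i = ψ_i − φ_{i−1} and θ_i = φ_i − ψ_i, and assume η_i, θ_i ∈ (−π/2, π/2) and sin(η_i + θ_i) ≠ 0 for all 1 ≤ i ≤ m. Define τ_i = ∑_{α=1}^{i} g_α · (−sin ψ_α, cos ψ_α) ∈ ℝ² for 0 ≤ i ≤ m and lines L_i = { τ_i + s·(cos φ_i, sin φ_i) : s ∈ ℝ }. Then there exists a point p ∈ ℝ² lying on L_i for all 0 ≤ i ≤ m if and only if g_i / g_1 = ( sin(η_i+θ_i) · cos θ_1 · C_i ) / ( sin(η_1+θ_1) · cos η_i ) for all 1 ≤ i ≤ m, where C_i = ∏_{α=1}^{i} (cos η_α / cos θ_α). -/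
open Real Finset

/-- A vector in the Euclidean plane `ℝ²` given by its two coordinates. -/
noncomputable def e2 (x y : ℝ) : EuclideanSpace ℝ (Fin 2) := !₂[x, y]

lemma step_iff (s t g φ ψ χ η θ : ℝ) (h1 : η = ψ - φ) (h2 : θ = χ - ψ) (hc : cos η ≠ 0) :
    (s * cos φ = -(g * sin ψ) + t * cos χ ∧ s * sin φ = g * cos ψ + t * sin χ) ↔
    (s * cos η = t * cos θ ∧ g * cos η = - t * sin (η + θ)) := by
  obtain rfl : φ = ψ - η := by linarith
  obtain rfl : χ = ψ + θ := by linarith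
  clear h1 h2
  rw [cos_sub, sin_sub, cos_add, sin_add, sin_add]
  have hp := sin_sq_add_cos_sq ψ
  constructor
  · rintro ⟨e1, e2⟩
    have k1 : s * cos η = t * cos θ := by
      linear_combination cos ψ * e1 + sin ψ * e2 - (s * cos η - t * cos θ) * hp
    have k2 : - s * sin η = g + t * sin θ := by
      linear_combination - sin ψ * e1 + cos ψ * e2 - (- s * sin η - g - t * sin θ) * hp
    exact ⟨k1, by linear_combination - cos η * k2 - sin η * k1⟩
  · rintro ⟨k1, k3⟩
    have k2 : - s * sin η = g + t * sin θ := by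
      apply mul_left_cancel₀ hc
      linear_combination - k3 - sin η * k1
    exact ⟨by linear_combination cos ψ * k1 - sin ψ * k2,
      by linear_combination sin ψ * k1 + cos ψ * k2⟩

lemma vec_step (p u : EuclideanSpace ℝ (Fin 2)) (s t g φ ψ χ : ℝ)
    (hp : p = u + s • e2 (cos φ) (sin φ)) :
    p = u + g • e2 (-(sin ψ)) (cos ψ) + t • e2 (cos χ) (sin χ) ↔
    (s * cos φ = -(g * sin ψ) + t * cos χ ∧ s * sin φ = g * cos ψ + t * sin χ) := by
  rw [hp, add_assoc, add_right_inj, PiLp.ext_iff, Fin.forall_fin_two]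
  simp [e2]

/-- **Theorem 2.9 (axiality criterion).** The profile lines `L i` of a T-net pass through a
common point iff `g i / g 1 = sin(η i + θ i) cos(θ 1) C i / (sin(η 1 + θ 1) cos(η i))`
for all `1 ≤ i ≤ m`. -/
theorem stmt_3 (m : ℕ) (hm : 1 ≤ m)
    (φ ψ g η θ : ℕ → ℝ)
    (hφ0 : φ 0 = 0)
    (hg : ∀ i ∈ Icc 1 m, g i ≠ 0)
    (hη : ∀ i ∈ Icc 1 m, η i = ψ i - φ (i - 1))
    (hθ : ∀ i ∈ Icc 1 m, θ i = φ i - ψ i)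
    (hηr : ∀ i ∈ Icc 1 m, η i ∈ Set.Ioo (-(π / 2)) (π / 2))
    (hθr : ∀ i ∈ Icc 1 m, θ i ∈ Set.Ioo (-(π / 2)) (π / 2))
    (hs : ∀ i ∈ Icc 1 m, sin (η i + θ i) ≠ 0)
    (τ : ℕ → EuclideanSpace ℝ (Fin 2))
    (hτ : ∀ i, τ i = ∑ α ∈ Icc 1 i, g α • e2 (-(sin (ψ α))) (cos (ψ α))) :
    (∃ p : EuclideanSpace ℝ (Fin 2), ∀ i ≤ m, ∃ s : ℝ,
        p = τ i + s • e2 (cos (φ i)) (sin (φ i))) ↔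
    (∀ i ∈ Icc 1 m, g i / g 1 =
        (sin (η i + θ i) * cos (θ 1) * ∏ α ∈ Icc 1 i, (cos (η α) / cos (θ α))) /
        (sin (η 1 + θ 1) * cos (η i))) := by
  have cη : ∀ i ∈ Icc 1 m, cos (η i) ≠ 0 := fun i hi => (cos_pos_of_mem_Ioo (hηr i hi)).ne'
  have cθ : ∀ i ∈ Icc 1 m, cos (θ i) ≠ 0 := fun i hi => (cos_pos_of_mem_Ioo (hθr i hi)).ne'
  have h1m : 1 ∈ Icc 1 m := by simp [hm]
  have hτs : ∀ i, τ (i + 1) = τ i + g (i + 1) • e2 (-(sin (ψ (i + 1)))) (cos (ψ (i + 1))) := by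
    intro i
    rw [hτ, hτ, Finset.sum_Icc_succ_top (by omega)]
  have hCs : ∀ i, ∏ α ∈ Icc 1 (i + 1), (cos (η α) / cos (θ α)) =
      (∏ α ∈ Icc 1 i, (cos (η α) / cos (θ α))) * (cos (η (i + 1)) / cos (θ (i + 1))) :=
    fun i => Finset.prod_Icc_succ_top (by omega) _
  have key : ∀ (p : EuclideanSpace ℝ (Fin 2)) (s t : ℝ) (i : ℕ), i + 1 ≤ m →
      p = τ i + s • e2 (cos (φ i)) (sin (φ i)) →
      (p = τ (i + 1) + t • e2 (cos (φ (i + 1))) (sin (φ (i + 1))) ↔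
      (s * cos (η (i + 1)) = t * cos (θ (i + 1)) ∧
        g (i + 1) * cos (η (i + 1)) = - t * sin (η (i + 1) + θ (i + 1)))) := by
    intro p s t i hi hp
    have hm' : i + 1 ∈ Icc 1 m := by simp [hi]
    rw [hτs, vec_step p _ s t _ _ _ _ hp,
      step_iff s t _ _ _ _ (η (i + 1)) (θ (i + 1)) (by simpa using hη _ hm') (hθ _ hm') (cη _ hm')]
  generalize hC : (fun i => ∏ α ∈ Icc 1 i, (cos (η α) / cos (θ α))) = C at *
  have hC' : ∀ i, ∏ α ∈ Icc 1 i, (cos (η α) / cos (θ α)) = C i := fun i => by rw [← hC]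
  simp only [hC'] at hCs ⊢
  have hC0 : C 0 = 1 := by rw [← hC]; simp
  have hC1 : C 1 = cos (η 1) / cos (θ 1) := by rw [← hC]; simp
  have e1 := cη 1 h1m
  have e2' := cθ 1 h1m
  have e3 := hs 1 h1m
  have e4 := hg 1 h1m
  constructor
  · rintro ⟨p, hp⟩
    choose! s hs' using hp
    have hk := fun i (hi : i + 1 ≤ m) =>
      (key p (s i) (s (i + 1)) i hi (hs' i (by omega))).1 (hs' (i + 1) hi)
    have hsC : ∀ i ≤ m, s i = s 0 * C i := by
      intro i
      induction i with
      | zero => simp [hC0]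
      | succ i ih =>
        intro hi
        have a := (hk i hi).1
        rw [ih (by omega)] at a
        have := cθ (i + 1) (by simp [hi])
        rw [hCs]
        field_simp
        linarith
    have hgi : ∀ i ∈ Icc 1 m, g i * cos (η i) = - (s 0 * C i) * sin (η i + θ i) := by
      intro i hi
      rw [Finset.mem_Icc] at hi
      obtain ⟨j, rfl⟩ : ∃ j, i = j + 1 := ⟨i - 1, by omega⟩
      rw [← hsC _ hi.2]
      exact (hk j hi.2).2
    intro i hi
    have a := hgi i hi
    have b := hgi 1 h1m
    rw [hC1] at b
    have b' : g 1 * cos (θ 1) = - s 0 * sin (η 1 + θ 1) := by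
      field_simp at b
      linarith
    have := cη i hi
    rw [div_eq_div_iff e4 (mul_ne_zero e3 this)]
    linear_combination sin (η 1 + θ 1) * a - sin (η i + θ i) * C i * b'
  · intro h
    set s0 : ℝ := - (g 1 * cos (θ 1)) / sin (η 1 + θ 1) with hs0
    have b' : s0 * sin (η 1 + θ 1) = - (g 1 * cos (θ 1)) := by
      rw [hs0]; field_simp
    refine ⟨τ 0 + s0 • e2 (cos (φ 0)) (sin (φ 0)), fun i hi => ⟨s0 * C i, ?_⟩⟩
    induction i with
    | zero => simp [hC0]
    | succ i ih =>
      have hm' : i + 1 ∈ Icc 1 m := by simp [hi]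
      refine (key _ _ _ i hi (ih (by omega))).2 ⟨?_, ?_⟩
      · have := cθ (i + 1) hm'
        rw [hCs]
        field_simp
      · have a := h _ hm'
        rw [div_eq_div_iff e4 (mul_ne_zero e3 (cη _ hm'))] at a
        apply mul_left_cancel₀ e3
        linear_combination a + C (i + 1) * sin (η (i + 1) + θ (i + 1)) * b'
end

section
/- Fix m, n ≥ 1 and data φ, ψ : {1,…,m} → ℝ with φ_0 := 0, η_i := ψ_i − φ_{i−1} ∈ (−π/2, π/2), θ_i := φ_i − ψ_i ∈ (−π/2, π/2); f : {1,…,n} → ℝ; g : {1,…,m} → ℝ with g_α ≠ 0; and z : {0,…,n} → ℝ with z_0 = 0 and z_β ≠ z_{β−1} for all β. Set C_0 = 1, C_i = ∏_{α=1}^{i}(cos η_α / cos θ_α), F_0 = 0, F_j = ∑_{β=1}^{j} f_β. For t ∈ ℝ assume: C_i² + t > 0 for all 0 ≤ i ≤ m; C_{i−1}² sin²η_i ≤ C_{i−1}² + t and C_i² sin²θ_i ≤ C_i² + t for all 1 ≤ i ≤ m; and (z_β − z_{β−1})² ≥ t·f_β² for all 1 ≤ β ≤ n. Define C_i(t) =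 √(C_i² + t), η_i(t) = arcsin( C_{i−1} sin η_i / C_{i−1}(t) ), θ_i(t) = arcsin( C_i sin θ_i / C_i(t) ), φ_i(t) = ∑_{α=1}^{i} (η_α(t) + θ_α(t)) with φ_0(t) = 0, ψ_i(t) = φ_{i−1}(t) + η_i(t), z_j(t) = ∑_{β=1}^{j} sign(z_β − z_{β−1}) · √( (z_β − z_{β−1})² − t f_β² ), and σ_{ij}(t) = ( ∑_{α=1}^{i} g_α (−sin ψ_α(t), cos ψ_α(t)) + C_i(t) F_j (cos φ_i(t), sin φ_i(t)), z_j(t) ) ∈ ℝ³. Then for every admissible t, every 1 ≤ i ≤ m and 1 ≤ j ≤ n, and every pair of indices (a,b), (c,d) ∈ {(i−1,j−1), (i,j−1), (i,j), (i−1,j)}, the Euclidean distance ‖σ_{ab}(t) − σ_{cd}(t)‖ equals ‖σ_{ab}(0) − σ_{cd}(0)‖; in particular each face of σ(t) is congruent to the corresponding face of the T-hedron σ = σ(0). -/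
open Real Finset

/-- A vector in Euclidean space `ℝ³` given by its three coordinates. -/
noncomputable def e3 (x y z : ℝ) : EuclideanSpace ℝ (Fin 3) := !₂[x, y, z]

theorem e3_dist_frame (c s D K t f h dz P1 P2 Z F0 y y' w w' : ℝ)
    (hcs : s ^ 2 + c ^ 2 = 1) (hD : D ^ 2 = K + t) (hdz : dz ^ 2 = h ^ 2 - t * f ^ 2) :
    dist (e3 (P1 + D * (F0 + w * f) * c - y * s) (P2 + D * (F0 + w * f) * s + y * c) (Z + w * dz))
      (e3 (P1 + D * (F0 + w' * f) * c - y' * s) (P2 + D * (F0 + w' * f) * s + y' * c) (Z + w' * dz))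
    = Real.sqrt ((K * f ^ 2 + h ^ 2) * (w - w') ^ 2 + (y - y') ^ 2) := by
  rw [EuclideanSpace.dist_eq]
  congr 1
  simp only [e3, Fin.sum_univ_three, Real.dist_eq, sq_abs]
  simp
  linear_combination (D ^ 2 * (w - w') ^ 2 * f ^ 2 + (y - y') ^ 2) * hcs
    + f ^ 2 * (w - w') ^ 2 * hD + (w - w') ^ 2 * hdz

theorem arcsin_frame (c S a u : ℝ) (hu : u = Real.sqrt (c ^ 2 + S)) (hpos : 0 < c ^ 2 + S)
    (hle : c ^ 2 * sin a ^ 2 ≤ c ^ 2 + S) :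
    u * sin (arcsin (c * sin a / u)) = c * sin a ∧
    u * cos (arcsin (c * sin a / u)) = Real.sqrt (c ^ 2 * cos a ^ 2 + S) := by
  have hu0 : 0 < u := by rw [hu]; exact Real.sqrt_pos.2 hpos
  have hu2 : u ^ 2 = c ^ 2 + S := by rw [hu]; exact Real.sq_sqrt hpos.le
  have habs : |c * sin a / u| ≤ 1 := by
    rw [← sq_le_one_iff_abs_le_one, div_pow, hu2, div_le_one hpos, mul_pow]
    exact hle
  obtain ⟨h1, h2⟩ := abs_le.1 habs
  constructor
  · rw [Real.sin_arcsin h1 h2]; field_simp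
  · rw [Real.cos_arcsin]
    have : c ^ 2 * cos a ^ 2 + S = u ^ 2 * (1 - (c * sin a / u) ^ 2) := by
      field_simp
      rw [hu2, Real.cos_sq']; ring
    rw [this, Real.sqrt_mul (sq_nonneg u), Real.sqrt_sq hu0.le]

theorem sign_sqrt_sq (x y : ℝ) (hx : x ≠ 0) (hy : 0 ≤ y) :
    (Real.sign x * Real.sqrt y) ^ 2 = y := by
  rw [mul_pow, Real.sq_sqrt hy]
  rcases Real.sign_apply_eq_of_ne_zero x hx with h | h <;> rw [h] <;> norm_num

/-- **Theorem 3.1.** The explicit isometric deformation of a general T-hedron: for every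
admissible deformation parameter `t`, each face of the deformed T-hedron `σ t` is congruent
to the corresponding face of the original T-hedron `σ 0` (all six pairwise distances among
the four vertices of a face are preserved). -/
theorem stmt_4 (m n : ℕ) (hm : 1 ≤ m) (hn : 1 ≤ n)
    (φ ψ f g z η θ C F : ℕ → ℝ)
    (hφ0 : φ 0 = 0)
    (hη : ∀ i ∈ Icc 1 m, η i = ψ i - φ (i - 1))
    (hθ : ∀ i ∈ Icc 1 m, θ i = φ i - ψ i)
    (hηr : ∀ i ∈ Icc 1 m, η i ∈ Set.Ioo (-(π / 2)) (π / 2))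
    (hθr : ∀ i ∈ Icc 1 m, θ i ∈ Set.Ioo (-(π / 2)) (π / 2))
    (hg : ∀ α ∈ Icc 1 m, g α ≠ 0)
    (hz0 : z 0 = 0)
    (hzne : ∀ β ∈ Icc 1 n, z β ≠ z (β - 1))
    (hC : ∀ i, C i = ∏ α ∈ Icc 1 i, (cos (η α) / cos (θ α)))
    (hF : ∀ j, F j = ∑ β ∈ Icc 1 j, f β)
    (Ct : ℝ → ℕ → ℝ) (ηt θt φt ψt zt : ℝ → ℕ → ℝ)
    (hCt : ∀ s i, Ct s i = Real.sqrt (C i ^ 2 + s))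
    (hηt : ∀ s, ∀ i ∈ Icc 1 m, ηt s i = arcsin (C (i - 1) * sin (η i) / Ct s (i - 1)))
    (hθt : ∀ s, ∀ i ∈ Icc 1 m, θt s i = arcsin (C i * sin (θ i) / Ct s i))
    (hφt : ∀ s i, φt s i = ∑ α ∈ Icc 1 i, (ηt s α + θt s α))
    (hψt : ∀ s, ∀ i ∈ Icc 1 m, ψt s i = φt s (i - 1) + ηt s i)
    (hzt : ∀ s j, zt s j = ∑ β ∈ Icc 1 j, Real.sign (z β - z (β - 1)) *
        Real.sqrt ((z β - z (β - 1)) ^ 2 - s * f β ^ 2))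
    (σ : ℝ → ℕ → ℕ → EuclideanSpace ℝ (Fin 3))
    (hσ : ∀ s i j, σ s i j =
        e3 ((∑ α ∈ Icc 1 i, g α * (-(sin (ψt s α)))) + Ct s i * F j * cos (φt s i))
           ((∑ α ∈ Icc 1 i, g α * cos (ψt s α)) + Ct s i * F j * sin (φt s i))
           (zt s j))
    (t : ℝ)
    (htC : ∀ i ≤ m, 0 < C i ^ 2 + t)
    (htη : ∀ i ∈ Icc 1 m, C (i - 1) ^ 2 * sin (η i) ^ 2 ≤ C (i - 1) ^ 2 + t)
    (htθ : ∀ i ∈ Icc 1 m, C i ^ 2 * sin (θ i) ^ 2 ≤ C i ^ 2 + t)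
    (htz : ∀ β ∈ Icc 1 n, t * f β ^ 2 ≤ (z β - z (β - 1)) ^ 2) :
    ∀ i ∈ Icc 1 m, ∀ j ∈ Icc 1 n,
      ∀ p ∈ ({(i - 1, j - 1), (i, j - 1), (i, j), (i - 1, j)} : Set (ℕ × ℕ)),
      ∀ q ∈ ({(i - 1, j - 1), (i, j - 1), (i, j), (i - 1, j)} : Set (ℕ × ℕ)),
        dist (σ t p.1 p.2) (σ t q.1 q.2) = dist (σ 0 p.1 p.2) (σ 0 q.1 q.2) := by
  intro i hi j hj
  obtain ⟨k, rfl⟩ : ∃ k, i = k + 1 := ⟨i - 1, by have := (Finset.mem_Icc.1 hi).1; omega⟩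
  obtain ⟨l, rfl⟩ : ∃ l, j = l + 1 := ⟨j - 1, by have := (Finset.mem_Icc.1 hj).1; omega⟩
  have hkm : k + 1 ≤ m := (Finset.mem_Icc.1 hi).2
  have hcη : ∀ a ∈ Icc 1 m, 0 < cos (η a) := fun a ha => Real.cos_pos_of_mem_Ioo (hηr a ha)
  have hcθ : ∀ a ∈ Icc 1 m, 0 < cos (θ a) := fun a ha => Real.cos_pos_of_mem_Ioo (hθr a ha)
  have hCpos : ∀ a ≤ m, 0 < C a := by
    intro a ha
    rw [hC]
    refine Finset.prod_pos fun b hb => ?_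
    have hb' : b ∈ Icc 1 m := by simp only [Finset.mem_Icc] at hb ⊢; omega
    exact div_pos (hcη b hb') (hcθ b hb')
  have hCs : C (k + 1) * cos (θ (k + 1)) = C k * cos (η (k + 1)) := by
    rw [hC (k + 1), hC k, Finset.prod_Icc_succ_top (by omega)]
    have := (hcθ _ hi).ne'
    field_simp
  simp only [Nat.add_sub_cancel]
  have hz' := sub_ne_zero.2 (hzne _ hj)
  simp only [Nat.add_sub_cancel] at hz'
  have key : ∀ s : ℝ, (∀ a ≤ m, 0 < C a ^ 2 + s) →
      (C k ^ 2 * sin (η (k + 1)) ^ 2 ≤ C k ^ 2 + s) →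
      (C (k + 1) ^ 2 * sin (θ (k + 1)) ^ 2 ≤ C (k + 1) ^ 2 + s) →
      (s * f (l + 1) ^ 2 ≤ (z (l + 1) - z l) ^ 2) →
      ∃ c S D dz P1 P2 Z : ℝ, S ^ 2 + c ^ 2 = 1 ∧
        D ^ 2 = (C k * cos (η (k + 1))) ^ 2 + s ∧
        dz ^ 2 = (z (l + 1) - z l) ^ 2 - s * f (l + 1) ^ 2 ∧
        ∀ p ∈ ({(k, l), (k + 1, l), (k + 1, l + 1), (k, l + 1)} : Set (ℕ × ℕ)),
          σ s p.1 p.2 = e3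
            (P1 + D * (F l + (if p.2 = l then 0 else 1) * f (l + 1)) * c
              - (if p.1 = k then - (C k * sin (η (k + 1)) * F p.2) else
                g (k + 1) + C (k + 1) * sin (θ (k + 1)) * F p.2) * S)
            (P2 + D * (F l + (if p.2 = l then 0 else 1) * f (l + 1)) * S
              + (if p.1 = k then - (C k * sin (η (k + 1)) * F p.2) else
                g (k + 1) + C (k + 1) * sin (θ (k + 1)) * F p.2) * c)
            (Z + (if p.2 = l then 0 else 1) * dz) := by
    intro s h1 h2 h3 h4
    have hA := arcsin_frame (C k) s (η (k + 1)) (Ct s k) (hCt s k) (h1 k (by omega)) h2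
    have hB := arcsin_frame (C (k + 1)) s (θ (k + 1)) (Ct s (k + 1)) (hCt s (k + 1))
      (h1 _ hkm) h3
    have e1 := hηt s _ hi
    simp only [Nat.add_sub_cancel] at e1
    rw [← e1] at hA
    rw [← hθt s _ hi] at hB
    obtain ⟨hA1, hA2⟩ := hA
    obtain ⟨hB1, hB2⟩ := hB
    rw [← mul_pow, hCs, mul_pow] at hB2
    have e2 := hψt s _ hi
    simp only [Nat.add_sub_cancel] at e2
    have e3' : φt s k = ψt s (k + 1) - ηt s (k + 1) := by rw [e2]; ring
    have e4 : φt s (k + 1) = ψt s (k + 1) + θt s (k + 1) := by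
      rw [e2, hφt s (k + 1), Finset.sum_Icc_succ_top (by omega), ← hφt s k]; ring
    have hFl : F (l + 1) = F l + f (l + 1) := by
      rw [hF, hF, Finset.sum_Icc_succ_top (by omega)]
    have hzl : zt s (l + 1) = zt s l + Real.sign (z (l + 1) - z l) *
        Real.sqrt ((z (l + 1) - z l) ^ 2 - s * f (l + 1) ^ 2) := by
      rw [hzt, hzt, Finset.sum_Icc_succ_top (by omega)]
      simp only [Nat.add_sub_cancel]
    have hD0 : 0 ≤ C k ^ 2 * cos (η (k + 1)) ^ 2 + s := by
      rw [Real.cos_sq']; linarith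
    refine ⟨cos (ψt s (k + 1)), sin (ψt s (k + 1)),
      Real.sqrt (C k ^ 2 * cos (η (k + 1)) ^ 2 + s),
      Real.sign (z (l + 1) - z l) * Real.sqrt ((z (l + 1) - z l) ^ 2 - s * f (l + 1) ^ 2),
      ∑ α ∈ Icc 1 k, g α * (-(sin (ψt s α))), ∑ α ∈ Icc 1 k, g α * cos (ψt s α), zt s l,
      Real.sin_sq_add_cos_sq _, ?_, ?_, ?_⟩
    · rw [Real.sq_sqrt hD0]; ring
    · exact sign_sqrt_sq _ _ hz' (by linarith)
    · have g1 : ∀ j', σ s k j' = e3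
          ((∑ α ∈ Icc 1 k, g α * (-(sin (ψt s α))))
            + Real.sqrt (C k ^ 2 * cos (η (k + 1)) ^ 2 + s) * F j' * cos (ψt s (k + 1))
            - (-(C k * sin (η (k + 1)) * F j')) * sin (ψt s (k + 1)))
          ((∑ α ∈ Icc 1 k, g α * cos (ψt s α))
            + Real.sqrt (C k ^ 2 * cos (η (k + 1)) ^ 2 + s) * F j' * sin (ψt s (k + 1))
            + (-(C k * sin (η (k + 1)) * F j')) * cos (ψt s (k + 1))) (zt s j') := by
        intro j'
        rw [hσ, e3', Real.cos_sub, Real.sin_sub, ← hA1, ← hA2]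
        congr 1 <;> ring
      have g2 : ∀ j', σ s (k + 1) j' = e3
          ((∑ α ∈ Icc 1 k, g α * (-(sin (ψt s α))))
            + Real.sqrt (C k ^ 2 * cos (η (k + 1)) ^ 2 + s) * F j' * cos (ψt s (k + 1))
            - (g (k + 1) + C (k + 1) * sin (θ (k + 1)) * F j') * sin (ψt s (k + 1)))
          ((∑ α ∈ Icc 1 k, g α * cos (ψt s α))
            + Real.sqrt (C k ^ 2 * cos (η (k + 1)) ^ 2 + s) * F j' * sin (ψt s (k + 1))
            + (g (k + 1) + C (k + 1) * sin (θ (k + 1)) * F j') * cos (ψt s (k + 1)))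
          (zt s j') := by
        intro j'
        rw [hσ, Finset.sum_Icc_succ_top (by omega), Finset.sum_Icc_succ_top (by omega), e4,
          Real.cos_add, Real.sin_add, ← hB1, ← hB2]
        congr 1 <;> ring
      rintro p (rfl | rfl | rfl | rfl)
      · rw [g1]; simp
      · rw [g2]; simp
      · rw [g2, hzl]; simp [hFl]
      · rw [g1, hzl]; simp [hFl]
  obtain ⟨c, S, D, dz, P1, P2, Z, a1, a2, a3, a4⟩ := key t htC (htη _ hi) (htθ _ hi) (htz _ hj)
  obtain ⟨c', S', D', dz', P1', P2', Z', b1, b2, b3, b4⟩ := key 0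
    (fun a ha => by have := hCpos a ha; positivity)
    (by nlinarith [sq_nonneg (C k), Real.sin_sq_le_one (η (k + 1))])
    (by nlinarith [sq_nonneg (C (k + 1)), Real.sin_sq_le_one (θ (k + 1))])
    (by nlinarith [sq_nonneg (z (l + 1) - z l)])
  intro p hp q hq
  rw [a4 p hp, a4 q hq, b4 p hp, b4 q hq]
  rw [e3_dist_frame c S D _ t _ _ dz P1 P2 Z _ _ _ _ _ a1 a2 a3,
    e3_dist_frame c' S' D' _ 0 _ _ dz' P1' P2' Z' _ _ _ _ _ b1 b2 b3]
end

section
/- Let m, n ≥ 1 and let x¹ : {0,…,m} → ℝ, x² : {0,…,n} → ℝ, y : {0,…,m} → ℝ, z : {0,…,n} → ℝ with x¹_0 = x²_0 = y_0 = z_0 = 0, and Δ_α y := y_α − y_{α−1} ≠ 0, Δ_β z := z_β − z_{β−1} ≠ 0. For t ∈ ℝ assume (Δ_α y)² + (1 − e^{−2t})(Δ_α x¹)² ≥ 0 for all 1 ≤ α ≤ m and (Δ_β z)² + (1 − e^{2t})(Δ_β x²)² ≥ 0 for all 1 ≤ β ≤ n, where Δ_α x¹ = x¹_α − x¹_{α−1},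 Δ_β x² = x²_β − x²_{β−1}. Define σ_{ij}(t) = ( e^{−t} x¹_i + e^{t} x²_j, y_i(t), z_j(t) ) ∈ ℝ³, where y_i(t) = ∑_{α=1}^{i} sign(Δ_α y)·√( (Δ_α y)² + (1 − e^{−2t})(Δ_α x¹)² ) and z_j(t) = ∑_{β=1}^{j} sign(Δ_β z)·√( (Δ_β z)² + (1 − e^{2t})(Δ_β x²)² ). Then for all admissible t and all 1 ≤ i ≤ m, 1 ≤ j ≤ n: (a) σ_{ij}(t) − σ_{i−1,j}(t) − σ_{i,j−1}(t) + σ_{i−1,j−1}(t) = 0 (all faces are parallelograms); (b) ‖σ_{ij}(t) − σ_{i−1,j}(t)‖ = ‖σ_{ij}(0) − σ_{i−1,j}(0)‖; (c) ‖σ_{ij}(t) − σ_{i,j−1}(t)‖ = ‖σ_{ij}(0) − σ_{i,j−1}(0)‖; (d) ⟪σ_{ij}(t) − σ_{i−1,j}(t), σ_{ij}(t) − σ_{i,j−1}(t)⟫ = ⟪σ_{ij}(0) − σ_{i−1,j}(0), σ_{ij}(0) − σ_{i,j−1}(0)⟫. Hence each face of σ(t) is congruent to the corresponding face of σ(0).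 -/
open Real Finset

theorem e3_sub_aux (a b c ap bp cp : ℝ) : e3 a b c - e3 ap bp cp = e3 (a - ap) (b - bp) (c - cp) := by
  ext k; fin_cases k <;> simp [e3]

theorem e3_inner_aux (a b c ap bp cp : ℝ) :
    (inner ℝ (e3 a b c) (e3 ap bp cp) : ℝ) = a * ap + b * bp + c * cp := by
  simp [e3, PiLp.inner_apply, Fin.sum_univ_three]
  ring

theorem e3_norm_aux (a b c : ℝ) : ‖e3 a b c‖ = Real.sqrt (a ^ 2 + b ^ 2 + c ^ 2) := by
  simp [e3, EuclideanSpace.norm_eq, Fin.sum_univ_three]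

theorem sum_step_aux (f : ℕ → ℝ) (i : ℕ) (hi : 1 ≤ i) :
    ∑ α ∈ Icc 1 i, f α - ∑ α ∈ Icc 1 (i - 1), f α = f i := by
  obtain ⟨k, rfl⟩ := Nat.exists_eq_add_of_le' hi
  rw [Finset.sum_Icc_succ_top (by omega)]
  simp

theorem sign_sqrt_sq_aux (d A : ℝ) (hd : d ≠ 0) (hA : 0 ≤ A) :
    (Real.sign d * Real.sqrt A) ^ 2 = A := by
  rw [mul_pow, Real.sq_sqrt hA]
  rcases Real.sign_apply_eq_of_ne_zero d hd with h | h <;> rw [h] <;> ring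

/-- **Theorem 3.2.** The explicit isometric deformation of a translational T-hedron
`σ_{ij} = (x¹_i + x²_j, y_i, z_j)`: for every admissible `t` all faces of `σ t` are
parallelograms, and each face of `σ t` is congruent to the corresponding face of `σ 0`
(the two spanning edge vectors keep their lengths and their inner product). -/
theorem stmt_5 (m n : ℕ) (hm : 1 ≤ m) (hn : 1 ≤ n)
    (x1 y x2 z : ℕ → ℝ)
    (hx10 : x1 0 = 0) (hx20 : x2 0 = 0) (hy0 : y 0 = 0) (hz0 : z 0 = 0)
    (hyne : ∀ α ∈ Icc 1 m, y α ≠ y (α - 1))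
    (hzne : ∀ β ∈ Icc 1 n, z β ≠ z (β - 1))
    (t : ℝ)
    (hty : ∀ α ∈ Icc 1 m,
      0 ≤ (y α - y (α - 1)) ^ 2 + (1 - Real.exp (-2 * t)) * (x1 α - x1 (α - 1)) ^ 2)
    (htz : ∀ β ∈ Icc 1 n,
      0 ≤ (z β - z (β - 1)) ^ 2 + (1 - Real.exp (2 * t)) * (x2 β - x2 (β - 1)) ^ 2)
    (yt zt : ℝ → ℕ → ℝ)
    (hyt : ∀ s i, yt s i = ∑ α ∈ Icc 1 i, Real.sign (y α - y (α - 1)) *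
        Real.sqrt ((y α - y (α - 1)) ^ 2 + (1 - Real.exp (-2 * s)) * (x1 α - x1 (α - 1)) ^ 2))
    (hzt : ∀ s j, zt s j = ∑ β ∈ Icc 1 j, Real.sign (z β - z (β - 1)) *
        Real.sqrt ((z β - z (β - 1)) ^ 2 + (1 - Real.exp (2 * s)) * (x2 β - x2 (β - 1)) ^ 2))
    (σ : ℝ → ℕ → ℕ → EuclideanSpace ℝ (Fin 3))
    (hσ : ∀ s i j, σ s i j = e3 (Real.exp (-s) * x1 i + Real.exp s * x2 j) (yt s i) (zt s j)) :
    ∀ i ∈ Icc 1 m, ∀ j ∈ Icc 1 n,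
      (σ t i j - σ t (i - 1) j - σ t i (j - 1) + σ t (i - 1) (j - 1) = 0) ∧
      ‖σ t i j - σ t (i - 1) j‖ = ‖σ 0 i j - σ 0 (i - 1) j‖ ∧
      ‖σ t i j - σ t i (j - 1)‖ = ‖σ 0 i j - σ 0 i (j - 1)‖ ∧
      (inner ℝ (σ t i j - σ t (i - 1) j) (σ t i j - σ t i (j - 1)) : ℝ) =
        inner ℝ (σ 0 i j - σ 0 (i - 1) j) (σ 0 i j - σ 0 i (j - 1)) := by
  intro i hi j hj
  have hi1 := (Finset.mem_Icc.mp hi).1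
  have hj1 := (Finset.mem_Icc.mp hj).1
  have hdy : ∀ s, 0 ≤ (y i - y (i - 1)) ^ 2 + (1 - Real.exp (-2 * s)) * (x1 i - x1 (i - 1)) ^ 2 →
      (yt s i - yt s (i - 1)) ^ 2 =
        (y i - y (i - 1)) ^ 2 + (1 - Real.exp (-2 * s)) * (x1 i - x1 (i - 1)) ^ 2 := by
    intro s hs
    rw [hyt, hyt, sum_step_aux _ i hi1]
    exact sign_sqrt_sq_aux _ _ (sub_ne_zero.mpr (hyne i hi)) hs
  have hdz : ∀ s, 0 ≤ (z j - z (j - 1)) ^ 2 + (1 - Real.exp (2 * s)) * (x2 j - x2 (j - 1)) ^ 2 →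
      (zt s j - zt s (j - 1)) ^ 2 =
        (z j - z (j - 1)) ^ 2 + (1 - Real.exp (2 * s)) * (x2 j - x2 (j - 1)) ^ 2 := by
    intro s hs
    rw [hzt, hzt, sum_step_aux _ j hj1]
    exact sign_sqrt_sq_aux _ _ (sub_ne_zero.mpr (hzne j hj)) hs
  have hy1 := hdy t (hty i hi)
  have hz1 := hdz t (htz j hj)
  have hy2 := hdy 0 (by simp; positivity)
  have hz2 := hdz 0 (by simp; positivity)
  have e1 : Real.exp (-2 * t) = Real.exp (-t) ^ 2 := by
    rw [← Real.exp_nat_mul]; congr 1; push_cast; ring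
  have e2 : Real.exp (2 * t) = Real.exp t ^ 2 := by
    rw [← Real.exp_nat_mul]; congr 1
  have e4 : Real.exp (-t) * Real.exp t = 1 := by
    rw [← Real.exp_add]; simp
  rw [e1] at hy1
  rw [e2] at hz1
  simp only [mul_zero, Real.exp_zero, sub_self, zero_mul, add_zero] at hy2 hz2
  simp only [hσ, e3_sub_aux, e3_inner_aux, e3_norm_aux, neg_zero, Real.exp_zero]
  refine ⟨?_, ?_, ?_, ?_⟩
  · ext k; fin_cases k <;> simp [e3] <;> ring
  · congr 1; linear_combination hy1 - hy2
  · congr 1; linear_combination hz1 - hz2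
  · linear_combination (x1 i - x1 (i - 1)) * (x2 j - x2 (j - 1)) * e4
end

section
/- Let m, n ≥ 1 and data g : {1,…,m} → ℝ, η : {1,…,m} → ℝ with η_α ∈ (−π/2, π/2), F : {0,…,n} → ℝ with F_0 = 0, z : {0,…,n} → ℝ with z_0 = 0 and z_β ≠ z_{β−1}. For t > −1 assume sin²η_α ≤ 1 + t for all α and (Δ_β z)² ≥ t (Δ_β F)² for all β, where Δ_β z = z_β − z_{β−1}, Δ_β F = F_β − F_{β−1}. Define φ_i(t) = 2·∑_{α=1}^{i} arcsin( sin η_α / √(1+t) ) with φ_0(t) = 0, ψ_α(t) = (φ_{α−1}(t) + φ_α(t))/2, z_j(t) = ∑_{β=1}^{j} sign(Δ_β z)·√( (Δ_β z)² − t (Δ_β F)² ), and σ_{ij}(t) = ( ∑_{α=1}^{i} g_α (−sin ψ_α(t), cos ψ_α(t)) + √(1+t)·F_j·(cos φ_i(t), sin φ_i(t)), z_j(t) ) ∈ ℝ³. Then for every admissible t, every 1 ≤ i ≤ m and 1 ≤ j ≤ n, all six pairwise Euclidean distances among the four points σ_{i−1,j−1}(t), σ_{i,j−1}(t), σ_{ij}(t),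 σ_{i−1,j}(t) equal the corresponding pairwise distances at t = 0; i.e. each face of σ(t) is congruent to the corresponding face of σ(0). -/
open Real Finset

theorem e3_dist (a b c a' b' c' : ℝ) : dist (e3 a b c) (e3 a' b' c') =
    Real.sqrt ((a - a') ^ 2 + (b - b') ^ 2 + (c - c') ^ 2) := by
  simp [e3, EuclideanSpace.dist_eq, Fin.sum_univ_three, Real.dist_eq, sq_abs]

theorem sum_step (f : ℕ → ℝ) (i : ℕ) (hi : 1 ≤ i) :
    ∑ α ∈ Icc 1 i, f α = ∑ α ∈ Icc 1 (i - 1), f α + f i := by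
  obtain ⟨k, rfl⟩ : ∃ k, i = k + 1 := ⟨i - 1, by omega⟩
  simp [Finset.sum_Icc_succ_top]

theorem sign_sq_one (x : ℝ) (hx : x ≠ 0) : Real.sign x ^ 2 = 1 := by
  rcases Real.sign_apply_eq_of_ne_zero x hx with h | h <;> rw [h] <;> norm_num

/-- distance along a profile -/
theorem dist_same (X Y r f f' φ w w' z z' s : ℝ) (hr : r ^ 2 = 1 + s)
    (hw : (w - w') ^ 2 = (z - z') ^ 2 - s * (f - f') ^ 2) :
    dist (e3 (X + r * f * cos φ) (Y + r * f * sin φ) w)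
      (e3 (X + r * f' * cos φ) (Y + r * f' * sin φ) w') =
    Real.sqrt ((f - f') ^ 2 + (z - z') ^ 2) := by
  rw [e3_dist]
  congr 1
  have h := sin_sq_add_cos_sq φ
  linear_combination hw + (f - f') ^ 2 * hr + r ^ 2 * (f - f') ^ 2 * h

/-- distance between neighbouring profiles -/
theorem dist_cross (X Y r f f' φ φ' ψ h S g w w' z z' s : ℝ) (hr : r ^ 2 = 1 + s)
    (hφ : φ = ψ - h) (hφ' : φ' = ψ + h) (hS : r * sin h = S)
    (hw : (w - w') ^ 2 = (z - z') ^ 2 - s * (f - f') ^ 2) :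
    dist (e3 (X + r * f * cos φ) (Y + r * f * sin φ) w)
      (e3 (X + g * (-(sin ψ)) + r * f' * cos φ') (Y + g * cos ψ + r * f' * sin φ') w') =
    Real.sqrt ((1 - S ^ 2) * (f - f') ^ 2 + (g + S * (f + f')) ^ 2 + (z - z') ^ 2) := by
  rw [e3_dist, hφ, hφ', cos_add, sin_add, cos_sub, sin_sub]
  congr 1
  have h1 := sin_sq_add_cos_sq ψ
  have h2 := sin_sq_add_cos_sq h
  subst hS
  linear_combination hw + (f - f') ^ 2 * hr + r ^ 2 * (f - f') ^ 2 * h2 +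
    ((r * cos h * (f - f')) ^ 2 + (g + r * sin h * (f + f')) ^ 2) * h1

/-- **Theorem 3.4.** The explicit isometric deformation of a discrete molding surface:
for every admissible `t`, each face of `σ t` is congruent to the corresponding face of
`σ 0` (all six pairwise distances among the four vertices of a face are preserved). -/
theorem stmt_6 (m n : ℕ) (hm : 1 ≤ m) (hn : 1 ≤ n)
    (g η : ℕ → ℝ) (F z : ℕ → ℝ)
    (hηr : ∀ α ∈ Icc 1 m, η α ∈ Set.Ioo (-(π / 2)) (π / 2))
    (hF0 : F 0 = 0) (hz0 : z 0 = 0)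
    (hzne : ∀ β ∈ Icc 1 n, z β ≠ z (β - 1))
    (t : ℝ) (ht : -1 < t)
    (htη : ∀ α ∈ Icc 1 m, sin (η α) ^ 2 ≤ 1 + t)
    (htz : ∀ β ∈ Icc 1 n, t * (F β - F (β - 1)) ^ 2 ≤ (z β - z (β - 1)) ^ 2)
    (φt ψt zt : ℝ → ℕ → ℝ)
    (hφt : ∀ s i, φt s i = 2 * ∑ α ∈ Icc 1 i, arcsin (sin (η α) / Real.sqrt (1 + s)))
    (hψt : ∀ s, ∀ α ∈ Icc 1 m, ψt s α = (φt s (α - 1) + φt s α) / 2)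
    (hzt : ∀ s j, zt s j = ∑ β ∈ Icc 1 j, Real.sign (z β - z (β - 1)) *
        Real.sqrt ((z β - z (β - 1)) ^ 2 - s * (F β - F (β - 1)) ^ 2))
    (σ : ℝ → ℕ → ℕ → EuclideanSpace ℝ (Fin 3))
    (hσ : ∀ s i j, σ s i j =
        e3 ((∑ α ∈ Icc 1 i, g α * (-(sin (ψt s α)))) + Real.sqrt (1 + s) * F j * cos (φt s i))
           ((∑ α ∈ Icc 1 i, g α * cos (ψt s α)) + Real.sqrt (1 + s) * F j * sin (φt s i))
           (zt s j)) :
    ∀ i ∈ Icc 1 m, ∀ j ∈ Icc 1 n,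
      ∀ p ∈ ({(i - 1, j - 1), (i, j - 1), (i, j), (i - 1, j)} : Set (ℕ × ℕ)),
      ∀ q ∈ ({(i - 1, j - 1), (i, j - 1), (i, j), (i - 1, j)} : Set (ℕ × ℕ)),
        dist (σ t p.1 p.2) (σ t q.1 q.2) = dist (σ 0 p.1 p.2) (σ 0 q.1 q.2) := by
  intro i hi j hj
  have hi1 : 1 ≤ i := (mem_Icc.1 hi).1
  have hj1 : 1 ≤ j := (mem_Icc.1 hj).1
  set S := sin (η i) with hSdef
  have main : ∀ s, -1 < s → S ^ 2 ≤ 1 + s →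
      s * (F j - F (j - 1)) ^ 2 ≤ (z j - z (j - 1)) ^ 2 →
      ∀ k ∈ ({j - 1, j} : Set ℕ), ∀ l ∈ ({j - 1, j} : Set ℕ),
      (∀ a, dist (σ s a k) (σ s a l) = Real.sqrt ((F k - F l) ^ 2 + (z k - z l) ^ 2)) ∧
      dist (σ s (i - 1) k) (σ s i l) = Real.sqrt ((1 - S ^ 2) * (F k - F l) ^ 2 +
        (g i + S * (F k + F l)) ^ 2 + (z k - z l) ^ 2) := by
    intro s hs hSs hzs k hk l hl
    have hr0 : 0 < Real.sqrt (1 + s) := Real.sqrt_pos.2 (by linarith)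
    have hr : Real.sqrt (1 + s) ^ 2 = 1 + s := Real.sq_sqrt (by linarith)
    have hj' : (zt s j - zt s (j - 1)) ^ 2 =
        (z j - z (j - 1)) ^ 2 - s * (F j - F (j - 1)) ^ 2 := by
      rw [hzt s j, sum_step _ j hj1, ← hzt s (j - 1), add_sub_cancel_left, mul_pow,
        sign_sq_one _ (sub_ne_zero.2 (hzne j hj)), Real.sq_sqrt (by linarith), one_mul]
    have hw : (zt s k - zt s l) ^ 2 = (z k - z l) ^ 2 - s * (F k - F l) ^ 2 := by
      rcases hk with rfl | rfl <;> rcases hl with rfl | rfl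
      · ring
      · linear_combination hj'
      · exact hj'
      · ring
    refine ⟨fun a => ?_, ?_⟩
    · rw [hσ, hσ]
      exact dist_same _ _ _ _ _ _ _ _ _ _ s hr hw
    · have habs : |S / Real.sqrt (1 + s)| ≤ 1 := by
        rw [abs_div, abs_of_pos hr0, div_le_one hr0]
        exact Real.abs_le_sqrt hSs
      have hstep : φt s i = φt s (i - 1) + 2 * arcsin (S / Real.sqrt (1 + s)) := by
        rw [hφt s i, hφt s (i - 1), sum_step _ i hi1]
        ring
      have hψ := hψt s i hi
      rw [hσ, hσ, sum_step _ i hi1, sum_step (fun α => g α * cos (ψt s α)) i hi1]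
      refine dist_cross _ _ _ _ _ _ _ _ (arcsin (S / Real.sqrt (1 + s))) S _ _ _ _ _ s hr
        ?_ ?_ ?_ hw
      · linarith
      · linarith
      · rw [sin_arcsin (abs_le.1 habs).1 (abs_le.1 habs).2]
        field_simp
  have Mt := main t ht (htη i hi) (htz j hj)
  have M0 := main 0 (by norm_num) (by rw [add_zero]; exact sin_sq_le_one _)
    (by rw [zero_mul]; positivity)
  have hA : ∀ k ∈ ({j - 1, j} : Set ℕ), ∀ l ∈ ({j - 1, j} : Set ℕ), ∀ a,
      dist (σ t a k) (σ t a l) = dist (σ 0 a k) (σ 0 a l) := fun k hk l hl a => by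
    rw [(Mt k hk l hl).1, (M0 k hk l hl).1]
  have hB : ∀ k ∈ ({j - 1, j} : Set ℕ), ∀ l ∈ ({j - 1, j} : Set ℕ),
      dist (σ t (i - 1) k) (σ t i l) = dist (σ 0 (i - 1) k) (σ 0 i l) := fun k hk l hl => by
    rw [(Mt k hk l hl).2, (M0 k hk l hl).2]
  have hC : ∀ k ∈ ({j - 1, j} : Set ℕ), ∀ l ∈ ({j - 1, j} : Set ℕ),
      dist (σ t i k) (σ t (i - 1) l) = dist (σ 0 i k) (σ 0 (i - 1) l) := fun k hk l hl => by
    rw [dist_comm, hB l hl k hk, dist_comm]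
  have split : ∀ p ∈ ({(i - 1, j - 1), (i, j - 1), (i, j), (i - 1, j)} : Set (ℕ × ℕ)),
      (p.1 = i - 1 ∨ p.1 = i) ∧ p.2 ∈ ({j - 1, j} : Set ℕ) := by
    rintro p (rfl | rfl | rfl | rfl) <;> simp
  intro p hp q hq
  obtain ⟨hp1, hp2⟩ := split p hp
  obtain ⟨hq1, hq2⟩ := split q hq
  rcases hp1 with hp1 | hp1 <;> rcases hq1 with hq1 | hq1 <;> rw [hp1, hq1]
  · exact hA _ hp2 _ hq2 _
  · exact hB _ hp2 _ hq2
  · exact hC _ hp2 _ hq2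
  · exact hA _ hp2 _ hq2 _
end

section
/- Let m, n ≥ 1 and data η, θ : {1,…,m} → ℝ with η_i, θ_i ∈ (−π/2, π/2), F : {0,…,n} → ℝ, and z : {0,…,n} → ℝ with z_β ≠ z_{β−1}. Set C_0 = 1, C_i = ∏_{α=1}^{i}(cos η_α / cos θ_α). For t ∈ ℝ assume C_i² + t > 0 for 0 ≤ i ≤ m, C_{i−1}² sin²η_i ≤ C_{i−1}² + t and C_i² sin²θ_i ≤ C_i² + t for 1 ≤ i ≤ m, and (Δ_β z)² ≥ t (Δ_β F)² for 1 ≤ β ≤ n, where Δ_β z = z_β − z_{β−1}, Δ_β F = F_β − F_{β−1}. Define C_i(t) = √(C_i² + t), η_i(t) = arcsin( C_{i−1} sin η_i / C_{i−1}(t) ), θ_i(t) = arcsin( C_i sin θ_i / C_i(t) ), φ_i(t) = ∑_{α=1}^{i}(η_α(t) + θ_α(t)) with φ_0(t) = 0, z_j(t) = z_0 + ∑_{β=1}^{j} sign(Δ_β z)·√( (Δ_β z)² − t (Δ_β F)² ), and σ_{ij}(t) = ( C_i(t) F_j cos φ_i(t), C_i(t) F_j sin φ_i(t), z_j(t) )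 ∈ ℝ³. Then for every admissible t, every 1 ≤ i ≤ m and 1 ≤ j ≤ n, all six pairwise Euclidean distances among the four points σ_{i−1,j−1}(t), σ_{i,j−1}(t), σ_{ij}(t), σ_{i−1,j}(t) equal the corresponding pairwise distances at t = 0; i.e. each face of the axial T-hedron σ(t) is congruent to the corresponding face of σ(0). -/
open Real Finset

theorem aux_polar (A s x : ℝ) (hA : 0 < A ^ 2 + s) (hx : A ^ 2 * sin x ^ 2 ≤ A ^ 2 + s) :
    √(A ^ 2 + s) * sin (arcsin (A * sin x / √(A ^ 2 + s))) = A * sin x ∧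
    √(A ^ 2 + s) * cos (arcsin (A * sin x / √(A ^ 2 + s))) = √(A ^ 2 * cos x ^ 2 + s) := by
  have hr : 0 < √(A ^ 2 + s) := Real.sqrt_pos.mpr hA
  have hr2 : √(A ^ 2 + s) ^ 2 = A ^ 2 + s := Real.sq_sqrt hA.le
  have habs : |A * sin x / √(A ^ 2 + s)| ≤ 1 := by
    rw [← sq_le_one_iff_abs_le_one, div_pow, hr2, div_le_one hA]
    nlinarith
  constructor
  · rw [Real.sin_arcsin (abs_le.mp habs).1 (abs_le.mp habs).2]
    field_simp
  · rw [Real.cos_arcsin, ← Real.sqrt_mul hA.le, div_pow, hr2]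
    congr 1
    rw [Real.cos_sq']
    field_simp
    ring

theorem aux_dist (A f a u B g b v : ℝ) :
    dist (e3 (A * f * cos a) (A * f * sin a) u) (e3 (B * g * cos b) (B * g * sin b) v) =
    √(A ^ 2 * f ^ 2 + B ^ 2 * g ^ 2 - 2 * f * g * (A * B * cos (b - a)) + (v - u) ^ 2) := by
  rw [EuclideanSpace.dist_eq, Real.cos_sub]
  congr 1
  simp only [e3, Fin.sum_univ_three, Real.dist_eq, sq_abs]
  simp
  linear_combination A ^ 2 * f ^ 2 * Real.sin_sq_add_cos_sq a +
    B ^ 2 * g ^ 2 * Real.sin_sq_add_cos_sq b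

/-- **Theorem 3.5.** The explicit isometric deformation of an axial T-hedron
`σ_{ij} = (C_i F_j cos φ_i, C_i F_j sin φ_i, z_j)`: for every admissible `t`, each face of
`σ t` is congruent to the corresponding face of `σ 0`. -/
theorem stmt_7 (m n : ℕ) (hm : 1 ≤ m) (hn : 1 ≤ n)
    (η θ : ℕ → ℝ) (F z C : ℕ → ℝ)
    (hηr : ∀ i ∈ Icc 1 m, η i ∈ Set.Ioo (-(π / 2)) (π / 2))
    (hθr : ∀ i ∈ Icc 1 m, θ i ∈ Set.Ioo (-(π / 2)) (π / 2))
    (hzne : ∀ β ∈ Icc 1 n, z β ≠ z (β - 1))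
    (hC : ∀ i, C i = ∏ α ∈ Icc 1 i, (cos (η α) / cos (θ α)))
    (t : ℝ)
    (htC : ∀ i ≤ m, 0 < C i ^ 2 + t)
    (htη : ∀ i ∈ Icc 1 m, C (i - 1) ^ 2 * sin (η i) ^ 2 ≤ C (i - 1) ^ 2 + t)
    (htθ : ∀ i ∈ Icc 1 m, C i ^ 2 * sin (θ i) ^ 2 ≤ C i ^ 2 + t)
    (htz : ∀ β ∈ Icc 1 n, t * (F β - F (β - 1)) ^ 2 ≤ (z β - z (β - 1)) ^ 2)
    (Ct ηt θt φt zt : ℝ → ℕ → ℝ)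
    (hCt : ∀ s i, Ct s i = Real.sqrt (C i ^ 2 + s))
    (hηt : ∀ s, ∀ i ∈ Icc 1 m, ηt s i = arcsin (C (i - 1) * sin (η i) / Ct s (i - 1)))
    (hθt : ∀ s, ∀ i ∈ Icc 1 m, θt s i = arcsin (C i * sin (θ i) / Ct s i))
    (hφt : ∀ s i, φt s i = ∑ α ∈ Icc 1 i, (ηt s α + θt s α))
    (hzt : ∀ s j, zt s j = z 0 + ∑ β ∈ Icc 1 j, Real.sign (z β - z (β - 1)) *
        Real.sqrt ((z β - z (β - 1)) ^ 2 - s * (F β - F (β - 1)) ^ 2))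
    (σ : ℝ → ℕ → ℕ → EuclideanSpace ℝ (Fin 3))
    (hσ : ∀ s i j, σ s i j =
        e3 (Ct s i * F j * cos (φt s i)) (Ct s i * F j * sin (φt s i)) (zt s j)) :
    ∀ i ∈ Icc 1 m, ∀ j ∈ Icc 1 n,
      ∀ p ∈ ({(i - 1, j - 1), (i, j - 1), (i, j), (i - 1, j)} : Set (ℕ × ℕ)),
      ∀ q ∈ ({(i - 1, j - 1), (i, j - 1), (i, j), (i - 1, j)} : Set (ℕ × ℕ)),
        dist (σ t p.1 p.2) (σ t q.1 q.2) = dist (σ 0 p.1 p.2) (σ 0 q.1 q.2) := by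
  intro i hi j hj
  obtain ⟨hi1, him⟩ := Finset.mem_Icc.mp hi
  obtain ⟨hj1, hjn⟩ := Finset.mem_Icc.mp hj
  have hcη : ∀ k ∈ Icc 1 m, 0 < cos (η k) := fun k hk => Real.cos_pos_of_mem_Ioo (hηr k hk)
  have hcθ : ∀ k ∈ Icc 1 m, 0 < cos (θ k) := fun k hk => Real.cos_pos_of_mem_Ioo (hθr k hk)
  have hCpos : ∀ k ≤ m, 0 < C k := by
    intro k hk
    rw [hC]
    apply Finset.prod_pos
    intro α hα
    have hα2 : α ∈ Icc 1 m := by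
      simp only [Finset.mem_Icc] at hα ⊢
      omega
    exact div_pos (hcη α hα2) (hcθ α hα2)
  obtain ⟨i, rfl⟩ : ∃ k, i = k + 1 := ⟨i - 1, by omega⟩
  obtain ⟨j, rfl⟩ : ∃ k, j = k + 1 := ⟨j - 1, by omega⟩
  simp only [Nat.add_sub_cancel]
  have hrec : C (i + 1) * cos (θ (i + 1)) = C i * cos (η (i + 1)) := by
    rw [hC (i + 1), hC i, Finset.prod_Icc_succ_top (by omega)]
    have := (hcθ _ hi).ne'
    field_simp
  have key : ∀ s, (∀ k ≤ m, 0 < C k ^ 2 + s) →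
      (C i ^ 2 * sin (η (i + 1)) ^ 2 ≤ C i ^ 2 + s) →
      (C (i + 1) ^ 2 * sin (θ (i + 1)) ^ 2 ≤ C (i + 1) ^ 2 + s) →
      (s * (F (j + 1) - F j) ^ 2 ≤ (z (j + 1) - z j) ^ 2) →
      Ct s i ^ 2 = C i ^ 2 + s ∧ Ct s (i + 1) ^ 2 = C (i + 1) ^ 2 + s ∧
      Ct s i * Ct s (i + 1) * cos (φt s (i + 1) - φt s i) =
        C i * C (i + 1) * cos (η (i + 1) + θ (i + 1)) + s ∧
      (zt s (j + 1) - zt s j) ^ 2 = (z (j + 1) - z j) ^ 2 - s * (F (j + 1) - F j) ^ 2 := by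
    intro s h1 h2 h3 h4
    refine ⟨?_, ?_, ?_, ?_⟩
    · rw [hCt, Real.sq_sqrt (h1 i (by omega)).le]
    · rw [hCt, Real.sq_sqrt (h1 (i + 1) him).le]
    · have e : φt s (i + 1) - φt s i = ηt s (i + 1) + θt s (i + 1) := by
        rw [hφt, hφt, Finset.sum_Icc_succ_top (by omega)]
        ring
      obtain ⟨a1, a2⟩ := aux_polar (C i) s (η (i + 1)) (h1 i (by omega)) h2
      obtain ⟨b1, b2⟩ := aux_polar (C (i + 1)) s (θ (i + 1)) (h1 (i + 1) him) h3
      have e1 := hηt s (i + 1) hi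
      have e2 := hθt s (i + 1) hi
      simp only [Nat.add_sub_cancel] at e1
      rw [hCt] at e1 e2
      rw [← e1, ← hCt] at a1 a2
      rw [← e2, ← hCt] at b1 b2
      have hk : C (i + 1) ^ 2 * cos (θ (i + 1)) ^ 2 = C i ^ 2 * cos (η (i + 1)) ^ 2 := by
        rw [← mul_pow, hrec, mul_pow]
      rw [hk] at b2
      have hK : √(C i ^ 2 * cos (η (i + 1)) ^ 2 + s) * √(C i ^ 2 * cos (η (i + 1)) ^ 2 + s) =
          C i ^ 2 * cos (η (i + 1)) ^ 2 + s := by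
        apply Real.mul_self_sqrt
        rw [Real.cos_sq']
        linarith
      rw [e, Real.cos_add, Real.cos_add]
      calc _ = (Ct s i * cos (ηt s (i + 1))) * (Ct s (i + 1) * cos (θt s (i + 1))) -
            (Ct s i * sin (ηt s (i + 1))) * (Ct s (i + 1) * sin (θt s (i + 1))) := by ring
        _ = _ := by
          rw [a1, a2, b1, b2, hK]
          linear_combination - C i * cos (η (i + 1)) * hrec
    · have e : zt s (j + 1) - zt s j = Real.sign (z (j + 1) - z j) *
          √((z (j + 1) - z j) ^ 2 - s * (F (j + 1) - F j) ^ 2) := by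
        rw [hzt, hzt, Finset.sum_Icc_succ_top (by omega)]
        simp only [Nat.add_sub_cancel]
        ring
      have hne : z (j + 1) - z j ≠ 0 := by
        have := hzne _ hj
        simp only [Nat.add_sub_cancel] at this
        exact sub_ne_zero.mpr this
      have hs : Real.sign (z (j + 1) - z j) ^ 2 = 1 := by
        rcases Real.sign_apply_eq_of_ne_zero _ hne with h | h <;> rw [h] <;> norm_num
      rw [e, mul_pow, hs, Real.sq_sqrt (by linarith), one_mul]
  have tη := htη _ hi
  have tz := htz _ hj
  simp only [Nat.add_sub_cancel] at tη tz
  obtain ⟨t1, t2, t3, t4⟩ := key t htC tη (htθ _ hi) tz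
  obtain ⟨s1, s2, s3, s4⟩ := key 0 (fun k hk => by have := hCpos k hk; positivity)
    (by nlinarith [Real.sin_sq_le_one (η (i + 1)), sq_nonneg (C i)])
    (by nlinarith [Real.sin_sq_le_one (θ (i + 1)), sq_nonneg (C (i + 1))])
    (by rw [zero_mul]; positivity)
  -- the six distances, each in one orientation
  have d1 : dist (σ t i j) (σ t (i + 1) j) = dist (σ 0 i j) (σ 0 (i + 1) j) := by
    simp only [hσ, aux_dist]
    rw [t1, t2, t3, s1, s2, s3]
    congr 1
    ring
  have d2 : dist (σ t i (j + 1)) (σ t (i + 1) (j + 1)) =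
      dist (σ 0 i (j + 1)) (σ 0 (i + 1) (j + 1)) := by
    simp only [hσ, aux_dist]
    rw [t1, t2, t3, s1, s2, s3]
    congr 1
    ring
  have d3 : dist (σ t i j) (σ t i (j + 1)) = dist (σ 0 i j) (σ 0 i (j + 1)) := by
    simp only [hσ, aux_dist, sub_self, Real.cos_zero, mul_one, ← pow_two]
    rw [t1, t4, s1, s4]
    congr 1
    ring
  have d4 : dist (σ t (i + 1) j) (σ t (i + 1) (j + 1)) =
      dist (σ 0 (i + 1) j) (σ 0 (i + 1) (j + 1)) := by
    simp only [hσ, aux_dist, sub_self, Real.cos_zero, mul_one, ← pow_two]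
    rw [t2, t4, s2, s4]
    congr 1
    ring
  have d5 : dist (σ t i j) (σ t (i + 1) (j + 1)) = dist (σ 0 i j) (σ 0 (i + 1) (j + 1)) := by
    simp only [hσ, aux_dist]
    rw [t1, t2, t3, t4, s1, s2, s3, s4]
    congr 1
    ring
  have d6 : dist (σ t i (j + 1)) (σ t (i + 1) j) = dist (σ 0 i (j + 1)) (σ 0 (i + 1) j) := by
    simp only [hσ, aux_dist]
    rw [t1, t2, t3, s1, s2, s3, sub_sq_comm (zt t j), sub_sq_comm (zt 0 j), t4, s4]
    congr 1
    ring
  intro p hp q hq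
  simp only [Set.mem_insert_iff, Set.mem_singleton_iff] at hp hq
  rcases hp with rfl | rfl | rfl | rfl <;> rcases hq with rfl | rfl | rfl | rfl <;>
    first
    | (simp only [dist_self]; done)
    | assumption
    | (simp only []; rw [dist_comm (σ t _ _), dist_comm (σ 0 _ _)]; assumption)
    | (rw [dist_comm (σ t _ _), dist_comm (σ 0 _ _)]; assumption)
end

section
/- Fix common angle data φ, ψ : {1,…,m} → ℝ with φ_0 = 0, η_i = ψ_i − φ_{i−1} ∈ (−π/2,π/2), θ_i = φ_i − ψ_i ∈ (−π/2,π/2), C_0 = 1, C_i = ∏_{α≤i} cos η_α / cos θ_α. Let σ(t) and σ'(t) be the deformed T-hedra given by the formulas of Theorem 3.1 from this angle data and from data (f, g, z) and (f', g', z') respectively, where z_0 = z'_0 = 0, g_α ≠ 0, g'_α ≠ 0, z_β ≠ z_{β−1}, and for every 1 ≤ β ≤ n there exists λ_β > 0 with f'_β = λ_β f_β and z'_β − z'_{β−1} = λ_β (z_β − z_{β−1}). Then for every t admissible for both: (a) for all 0 ≤ i ≤ m and 1 ≤ j ≤ n, σ'_{ij}(t) − σ'_{i,j−1}(t) = λ_j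 · ( σ_{ij}(t) − σ_{i,j−1}(t) ); (b) for all 1 ≤ i ≤ m and 0 ≤ j ≤ n, both σ_{ij}(t) − σ_{i−1,j}(t) and σ'_{ij}(t) − σ'_{i−1,j}(t) are scalar multiples of the vector (−sin ψ_i(t), cos ψ_i(t), 0). In particular all corresponding edges of σ(t) and σ'(t) are parallel for all t. -/
open Real Finset

theorem aux_cos (X x : ℝ) (hX : 0 < X) :
    Real.sqrt X * cos (arcsin (x / Real.sqrt X)) = Real.sqrt (X - x ^ 2) := by
  rw [Real.cos_arcsin, ← Real.sqrt_mul hX.le, div_pow, Real.sq_sqrt hX.le]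
  congr 1
  field_simp

theorem aux_sign (l a b t : ℝ) (hl : 0 < l) :
    Real.sign (l * a) * Real.sqrt ((l * a) ^ 2 - t * (l * b) ^ 2) =
      l * (Real.sign a * Real.sqrt (a ^ 2 - t * b ^ 2)) := by
  have h1 : Real.sign (l * a) = Real.sign a := by
    rcases lt_trichotomy a 0 with h | h | h
    · rw [Real.sign_of_neg h, Real.sign_of_neg (mul_neg_of_pos_of_neg hl h)]
    · simp [h]
    · rw [Real.sign_of_pos h, Real.sign_of_pos (mul_pos hl h)]
  have h2 : (l * a) ^ 2 - t * (l * b) ^ 2 = l ^ 2 * (a ^ 2 - t * b ^ 2) := by ring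
  rw [h1, h2, Real.sqrt_mul (sq_nonneg l), Real.sqrt_sq hl.le]
  ring

theorem aux_e3_sub (a b c a' b' c' : ℝ) :
    e3 a b c - e3 a' b' c' = e3 (a - a') (b - b') (c - c') := by
  ext k
  fin_cases k <;> simp [e3]

theorem aux_e3_smul (r a b c : ℝ) : r • e3 a b c = e3 (r * a) (r * b) (r * c) := by
  ext k
  fin_cases k <;> simp [e3]

theorem aux_edge (G1 G2 g S S' F A P T E Z : ℝ) (h : S * cos T = S' * cos E)
    (hA : A = P - E) :
    e3 ((G1 + g * (-(sin P))) + S * F * cos (P + T)) ((G2 + g * cos P) + S * F * sin (P + T)) Z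
      - e3 (G1 + S' * F * cos A) (G2 + S' * F * sin A) Z
      = (g + F * (S * sin T + S' * sin E)) • e3 (-(sin P)) (cos P) 0 := by
  subst hA
  rw [aux_e3_sub, aux_e3_smul, cos_add, sin_add, cos_sub, sin_sub]
  congr 1
  · linear_combination F * cos P * h
  · linear_combination F * sin P * h
  · ring

/-- **Theorem 3.8 (discrete version).** Two parallel T-hedra (same angle data `φ, ψ`, profile
data related by `f'_β = λ_β f_β`, `Δ_β z' = λ_β Δ_β z` with `λ_β > 0`) remain parallel during
their isometric deformations of Theorem 3.1: corresponding profile edges stay positively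
proportional and corresponding trajectory edges stay parallel to `(−sin ψ_i(t), cos ψ_i(t), 0)`. -/
theorem stmt_8 (m n : ℕ) (hm : 1 ≤ m) (hn : 1 ≤ n)
    (φ ψ η θ C : ℕ → ℝ)
    (hφ0 : φ 0 = 0)
    (hη : ∀ i ∈ Icc 1 m, η i = ψ i - φ (i - 1))
    (hθ : ∀ i ∈ Icc 1 m, θ i = φ i - ψ i)
    (hηr : ∀ i ∈ Icc 1 m, η i ∈ Set.Ioo (-(π / 2)) (π / 2))
    (hθr : ∀ i ∈ Icc 1 m, θ i ∈ Set.Ioo (-(π / 2)) (π / 2))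
    (hC : ∀ i, C i = ∏ α ∈ Icc 1 i, (cos (η α) / cos (θ α)))
    -- the two data sets (f, g, z) and (f', g', z')
    (f g z f' g' z' : ℕ → ℝ) (F F' : ℕ → ℝ)
    (hg : ∀ α ∈ Icc 1 m, g α ≠ 0) (hg' : ∀ α ∈ Icc 1 m, g' α ≠ 0)
    (hz0 : z 0 = 0) (hz'0 : z' 0 = 0)
    (hzne : ∀ β ∈ Icc 1 n, z β ≠ z (β - 1))
    (hF : ∀ j, F j = ∑ β ∈ Icc 1 j, f β)
    (hF' : ∀ j, F' j = ∑ β ∈ Icc 1 j, f' β)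
    -- the parallelity relation between the two data sets
    (lam : ℕ → ℝ)
    (hlam : ∀ β ∈ Icc 1 n, 0 < lam β ∧ f' β = lam β * f β ∧
        z' β - z' (β - 1) = lam β * (z β - z (β - 1)))
    -- the deformation data of Theorem 3.1 (angle part is common to both T-hedra)
    (Ct ηt θt φt ψt zt z't : ℝ → ℕ → ℝ)
    (hCt : ∀ s i, Ct s i = Real.sqrt (C i ^ 2 + s))
    (hηt : ∀ s, ∀ i ∈ Icc 1 m, ηt s i = arcsin (C (i - 1) * sin (η i) / Ct s (i - 1)))
    (hθt : ∀ s, ∀ i ∈ Icc 1 m, θt s i = arcsin (C i * sin (θ i) / Ct s i))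
    (hφt : ∀ s i, φt s i = ∑ α ∈ Icc 1 i, (ηt s α + θt s α))
    (hψt : ∀ s, ∀ i ∈ Icc 1 m, ψt s i = φt s (i - 1) + ηt s i)
    (hzt : ∀ s j, zt s j = ∑ β ∈ Icc 1 j, Real.sign (z β - z (β - 1)) *
        Real.sqrt ((z β - z (β - 1)) ^ 2 - s * f β ^ 2))
    (hz't : ∀ s j, z't s j = ∑ β ∈ Icc 1 j, Real.sign (z' β - z' (β - 1)) *
        Real.sqrt ((z' β - z' (β - 1)) ^ 2 - s * f' β ^ 2))
    (σ σ' : ℝ → ℕ → ℕ → EuclideanSpace ℝ (Fin 3))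
    (hσ : ∀ s i j, σ s i j =
        e3 ((∑ α ∈ Icc 1 i, g α * (-(sin (ψt s α)))) + Ct s i * F j * cos (φt s i))
           ((∑ α ∈ Icc 1 i, g α * cos (ψt s α)) + Ct s i * F j * sin (φt s i))
           (zt s j))
    (hσ' : ∀ s i j, σ' s i j =
        e3 ((∑ α ∈ Icc 1 i, g' α * (-(sin (ψt s α)))) + Ct s i * F' j * cos (φt s i))
           ((∑ α ∈ Icc 1 i, g' α * cos (ψt s α)) + Ct s i * F' j * sin (φt s i))
           (z't s j))
    -- a deformation parameter admissible for both T-hedra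
    (t : ℝ)
    (htC : ∀ i ≤ m, 0 < C i ^ 2 + t)
    (htη : ∀ i ∈ Icc 1 m, C (i - 1) ^ 2 * sin (η i) ^ 2 ≤ C (i - 1) ^ 2 + t)
    (htθ : ∀ i ∈ Icc 1 m, C i ^ 2 * sin (θ i) ^ 2 ≤ C i ^ 2 + t)
    (htz : ∀ β ∈ Icc 1 n, t * f β ^ 2 ≤ (z β - z (β - 1)) ^ 2)
    (htz' : ∀ β ∈ Icc 1 n, t * f' β ^ 2 ≤ (z' β - z' (β - 1)) ^ 2) :
    (∀ i ≤ m, ∀ j ∈ Icc 1 n,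
      σ' t i j - σ' t i (j - 1) = lam j • (σ t i j - σ t i (j - 1))) ∧
    (∀ i ∈ Icc 1 m, ∀ j ≤ n,
      (∃ c : ℝ, σ t i j - σ t (i - 1) j = c • e3 (-(sin (ψt t i))) (cos (ψt t i)) 0) ∧
      (∃ c' : ℝ, σ' t i j - σ' t (i - 1) j = c' • e3 (-(sin (ψt t i))) (cos (ψt t i)) 0)) := by
  constructor
  · intro i hi j hj
    obtain ⟨hl, hf, hzz⟩ := hlam j hj
    obtain ⟨k, rfl⟩ : ∃ k, j = k + 1 := ⟨j - 1, by have := (Finset.mem_Icc.1 hj).1; omega⟩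
    have e1 := aux_sign (lam (k + 1)) (z (k + 1) - z k) (f (k + 1)) t hl
    simp only [Nat.add_sub_cancel] at hzz ⊢
    rw [hσ', hσ', hσ, hσ, aux_e3_sub, aux_e3_sub, aux_e3_smul, hz't, hz't, hzt, hzt,
      hF', hF', hF, hF]
    simp only [Finset.sum_Icc_succ_top (Nat.le_add_left 1 k), Nat.add_sub_cancel]
    rw [hzz, hf]
    congr 1
    · ring
    · ring
    · linear_combination e1
  · intro i hi j hj
    obtain ⟨him1, him2⟩ := Finset.mem_Icc.1 hi
    have hψi := hψt t i hi
    have hηi := hηt t i hi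
    have hθi := hθt t i hi
    have hct := (Real.cos_pos_of_mem_Ioo (hθr i hi)).ne'
    obtain ⟨k, rfl⟩ : ∃ k, i = k + 1 := ⟨i - 1, by omega⟩
    simp only [Nat.add_sub_cancel] at hψi hηi ⊢
    have hCC : C (k + 1) * cos (θ (k + 1)) = C k * cos (η (k + 1)) := by
      rw [hC, hC, Finset.prod_Icc_succ_top (Nat.le_add_left 1 k)]
      field_simp
    have hkey : Ct t (k + 1) * cos (θt t (k + 1)) = Ct t k * cos (ηt t (k + 1)) := by
      rw [hθi, hηi, hCt, hCt, aux_cos _ _ (htC _ him2), aux_cos _ _ (htC k (by omega))]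
      congr 1
      have s1 := Real.sin_sq_add_cos_sq (θ (k + 1))
      have s2 := Real.sin_sq_add_cos_sq (η (k + 1))
      linear_combination (C (k + 1) * cos (θ (k + 1)) + C k * cos (η (k + 1))) * hCC
        - C (k + 1) ^ 2 * s1 + C k ^ 2 * s2
    have hφ1 : φt t (k + 1) = ψt t (k + 1) + θt t (k + 1) := by
      rw [hψi, hφt, hφt, Finset.sum_Icc_succ_top (Nat.le_add_left 1 k)]
      ring
    have hφ2 : φt t k = ψt t (k + 1) - ηt t (k + 1) := by
      rw [hψi]; ring
    constructor
    · refine ⟨g (k + 1) + F j * (Ct t (k + 1) * sin (θt t (k + 1)) + Ct t k * sin (ηt t (k + 1))), ?_⟩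
      rw [hσ, hσ, hφ1, Finset.sum_Icc_succ_top (Nat.le_add_left 1 k),
        Finset.sum_Icc_succ_top (Nat.le_add_left 1 k)]
      exact aux_edge _ _ _ _ _ _ _ _ _ _ _ hkey hφ2
    · refine ⟨g' (k + 1) + F' j * (Ct t (k + 1) * sin (θt t (k + 1)) + Ct t k * sin (ηt t (k + 1))), ?_⟩
      rw [hσ', hσ', hφ1, Finset.sum_Icc_succ_top (Nat.le_add_left 1 k),
        Finset.sum_Icc_succ_top (Nat.le_add_left 1 k)]
      exact aux_edge _ _ _ _ _ _ _ _ _ _ _ hkey hφ2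
end

section
/- Let U, V ⊆ ℝ be open intervals, γ : U → ℝ² and ξ : U → ℝ² smooth, f, z : V → ℝ smooth, and λ : U → ℝ such that: γ'(u) ≠ 0 for all u; ξ'(u) = λ(u)·γ'(u) for all u; ξ(u) and γ'(u) are linearly independent for all u; 1 + f(v)·λ(u) ≠ 0 for all (u,v); and (f'(v), z'(v)) ≠ (0,0) for all v. Define σ : U × V → ℝ³ by σ(u,v) = (γ(u) + f(v)·ξ(u), z(v)). Then for every (u,v): (i) the partial derivatives σ_u(u,v) = (γ'(u) + f(v)ξ'(u), 0) and σ_v(u,v) = (f'(v)ξ(u), z'(v)) are linearly independent, so σ is a regular parametrized surface; (ii) the mixed partial derivative σ_{uv}(u,v) = (f'(v)ξ'(u), 0) is a scalar multiple of σ_u(u,v); in particular σ_{uv}(u,v) ∈ span{σ_u(u,v), σ_v(u,v)}, i.e. the coordinate net of σ is conjugate. -/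
open Real Set

/-- The vector of `ℝ³` with ground-view component `w ∈ ℝ²` and height `r`. -/
noncomputable def emb (w : EuclideanSpace ℝ (Fin 2)) (r : ℝ) : EuclideanSpace ℝ (Fin 3) :=
  !₂[w 0, w 1, r]

/-- `emb` as a linear map on the product. -/
noncomputable def embLin : (EuclideanSpace ℝ (Fin 2) × ℝ) →ₗ[ℝ] EuclideanSpace ℝ (Fin 3) where
  toFun p := emb p.1 p.2
  map_add' p q := by
    ext i; fin_cases i <;> simp [emb]
  map_smul' c p := by
    ext i; fin_cases i <;> simp [emb]

lemma emb_smul (c : ℝ) (w : EuclideanSpace ℝ (Fin 2)) (r : ℝ) :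
    c • emb w r = emb (c • w) (c * r) :=
  (embLin.map_smul c (w, r)).symm

lemma emb_add (w w' : EuclideanSpace ℝ (Fin 2)) (r r' : ℝ) :
    emb w r + emb w' r' = emb (w + w') (r + r') :=
  (embLin.map_add (w, r) (w', r')).symm

lemma emb_eq_zero {w : EuclideanSpace ℝ (Fin 2)} {r : ℝ} (h : emb w r = 0) :
    w = 0 ∧ r = 0 := by
  have h0 := congrArg (fun x : EuclideanSpace ℝ (Fin 3) => x 0) h
  have h1 := congrArg (fun x : EuclideanSpace ℝ (Fin 3) => x 1) h
  have h2 := congrArg (fun x : EuclideanSpace ℝ (Fin 3) => x 2) h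
  simp [emb] at h0 h1 h2
  refine ⟨?_, h2⟩
  ext i; fin_cases i <;> simp [h0, h1]

lemma emb_hasDerivAt {w : ℝ → EuclideanSpace ℝ (Fin 2)} {r : ℝ → ℝ}
    {w' : EuclideanSpace ℝ (Fin 2)} {r' t : ℝ}
    (hw : HasDerivAt w w' t) (hr : HasDerivAt r r' t) :
    HasDerivAt (fun s => emb (w s) (r s)) (emb w' r') t :=
  (LinearMap.toContinuousLinearMap embLin).hasFDerivAt.comp_hasDerivAt t (hw.prodMk hr)

/-- **Theorem 4.2 (converse direction).** Every map
`σ(u,v) = (γ(u) + f(v)ξ(u), z(v))` with the listed conditions is a regular parametrized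
surface (σ_u, σ_v linearly independent) whose coordinate net is conjugate
(σ_{uv} is a scalar multiple of σ_u, in particular σ_{uv} ∈ span{σ_u, σ_v}). -/
theorem stmt_9 (U V : Set ℝ) (hU : IsOpen U) (hV : IsOpen V)
    (hUc : U.OrdConnected) (hVc : V.OrdConnected)
    (γ ξ γ' ξ' : ℝ → EuclideanSpace ℝ (Fin 2))
    (f z f' z' : ℝ → ℝ) (lam : ℝ → ℝ)
    (hγ : ∀ u ∈ U, HasDerivAt γ (γ' u) u)
    (hξ : ∀ u ∈ U, HasDerivAt ξ (ξ' u) u)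
    (hf : ∀ v ∈ V, HasDerivAt f (f' v) v)
    (hz : ∀ v ∈ V, HasDerivAt z (z' v) v)
    (hγ'ne : ∀ u ∈ U, γ' u ≠ 0)
    (hlam : ∀ u ∈ U, ξ' u = lam u • γ' u)
    (hind : ∀ u ∈ U, LinearIndependent ℝ ![ξ u, γ' u])
    (hreg : ∀ u ∈ U, ∀ v ∈ V, 1 + f v * lam u ≠ 0)
    (hfz : ∀ v ∈ V, ¬(f' v = 0 ∧ z' v = 0))
    (σ : ℝ → ℝ → EuclideanSpace ℝ (Fin 3))
    (hσ : ∀ u v, σ u v = emb (γ u + f v • ξ u) (z v)) :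
    ∀ u ∈ U, ∀ v ∈ V,
      -- (i) σ_u and σ_v exist, are as claimed, and are linearly independent
      HasDerivAt (fun u' => σ u' v) (emb (γ' u + f v • ξ' u) 0) u ∧
      HasDerivAt (fun v' => σ u v') (emb (f' v • ξ u) (z' v)) v ∧
      LinearIndependent ℝ ![emb (γ' u + f v • ξ' u) 0, emb (f' v • ξ u) (z' v)] ∧
      -- (ii) σ_{uv} = ∂/∂u (σ_v) exists, is as claimed, is a scalar multiple of σ_u,
      --      and lies in span{σ_u, σ_v}
      HasDerivAt (fun u' => emb (f' v • ξ u') (z' v)) (emb (f' v • ξ' u) 0) u ∧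
      (∃ c : ℝ, emb (f' v • ξ' u) 0 = c • emb (γ' u + f v • ξ' u) 0) ∧
      emb (f' v • ξ' u) 0 ∈
        Submodule.span ℝ {emb (γ' u + f v • ξ' u) 0, emb (f' v • ξ u) (z' v)} := by
  intro u hu v hv
  have hc : ∃ c : ℝ, emb (f' v • ξ' u) 0 = c • emb (γ' u + f v • ξ' u) 0 := by
    refine ⟨f' v * lam u / (1 + f v * lam u), ?_⟩
    have h := hreg u hu v hv
    have e : γ' u + f v • ξ' u = (1 + f v * lam u) • γ' u := by
      rw [hlam u hu]; module
    rw [emb_smul, e, hlam u hu, smul_smul, smul_smul, mul_zero, div_mul_cancel₀ _ h]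
  refine ⟨?_, ?_, ?_, ?_, hc, ?_⟩
  · simp only [hσ]
    exact emb_hasDerivAt ((hγ u hu).add ((hξ u hu).const_smul (f v))) (hasDerivAt_const u (z v))
  · simp only [hσ]
    exact emb_hasDerivAt (((hf v hv).smul_const (ξ u)).const_add (γ u)) (hz v hv)
  · rw [LinearIndependent.pair_iff]
    intro a b hab
    rw [emb_smul, emb_smul, emb_add] at hab
    obtain ⟨h1, h2⟩ := emb_eq_zero hab
    have h3 : (b * f' v) • ξ u + (a * (1 + f v * lam u)) • γ' u = 0 := by
      rw [← h1, hlam u hu]; module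
    obtain ⟨h4, h5⟩ := LinearIndependent.pair_iff.mp (hind u hu) _ _ h3
    refine ⟨(mul_eq_zero.mp h5).resolve_right (hreg u hu v hv), ?_⟩
    by_contra hb
    refine hfz v hv ⟨(mul_eq_zero.mp h4).resolve_left hb, ?_⟩
    have h6 : b * z' v = 0 := by linarith
    exact (mul_eq_zero.mp h6).resolve_left hb
  · exact emb_hasDerivAt ((hξ u hu).const_smul (f' v)) (hasDerivAt_const u (z' v))
  · obtain ⟨c, hc⟩ := hc
    rw [hc]
    exact Submodule.smul_mem _ c (Submodule.subset_span (by simp))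
end

section
/- Let c, φ, g, ψ : U → ℝ be differentiable on an interval U with c(u) ≠ 0 and g(u) ≠ 0 for all u. Define ξ(u) = c(u)·(cos φ(u), sin φ(u)), and let γ : U → ℝ² be differentiable with γ'(u) = g(u)·(−sin ψ(u), cos ψ(u)). Then for each u ∈ U, the vectors ξ'(u) and γ'(u) are linearly dependent if and only if c'(u)·cos(φ(u) − ψ(u)) = c(u)·φ'(u)·sin(φ(u) − ψ(u)). -/
open Real Set

theorem aux_deriv (f : ℝ → EuclideanSpace ℝ (Fin 2)) (v : EuclideanSpace ℝ (Fin 2))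
    (U : Set ℝ) (u : ℝ) :
    HasDerivWithinAt f v U u ↔ ∀ i, HasDerivWithinAt (fun x => f x i) (v i) U u := by
  rw [hasDerivWithinAt_iff_hasFDerivWithinAt, hasFDerivWithinAt_euclidean]
  refine forall_congr' fun i => ?_
  rw [hasDerivWithinAt_iff_hasFDerivWithinAt]
  apply iff_of_eq
  congr 1

theorem aux_e2 (a b x y : ℝ) :
    ¬ LinearIndependent ℝ ![e2 a b, e2 x y] ↔ a * y - b * x = 0 := by
  have key : ∀ s t : ℝ, s • e2 a b + t • e2 x y = 0 ↔ s * a + t * x = 0 ∧ s * b + t * y = 0 := by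
    intro s t
    constructor
    · intro h
      have h0 := congrArg (fun v : EuclideanSpace ℝ (Fin 2) => v 0) h
      have h1 := congrArg (fun v : EuclideanSpace ℝ (Fin 2) => v 1) h
      simp [e2] at h0 h1
      exact ⟨h0, h1⟩
    · rintro ⟨h0, h1⟩
      ext i
      fin_cases i
      · simpa [e2] using h0
      · simpa [e2] using h1
  rw [LinearIndependent.pair_iff]
  constructor
  · intro h
    by_contra hd
    apply h
    intro s t hst
    obtain ⟨h0, h1⟩ := (key s t).1 hst
    constructor
    · have : s * (a * y - b * x) = 0 := by linear_combination y * h0 - x * h1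
      exact (mul_eq_zero.1 this).resolve_right hd
    · have : t * (a * y - b * x) = 0 := by linear_combination a * h1 - b * h0
      exact (mul_eq_zero.1 this).resolve_right hd
  · intro hd h
    have h1 := h y (-b) ((key _ _).2 ⟨by linarith, by ring⟩)
    have h2 := h x (-a) ((key _ _).2 ⟨by ring, by linarith⟩)
    have h3 := h 1 0 ((key _ _).2 ⟨by linarith [h2.2], by linarith [h1.2]⟩)
    exact one_ne_zero h3.1

/-- **Lemma 4.3.** For `ξ(u) = c(u)(cos φ(u), sin φ(u))` and a curve `γ` with
`γ'(u) = g(u)(−sin ψ(u), cos ψ(u))` (with `c, g` nowhere zero), the vectors `ξ'(u)` and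
`γ'(u)` are linearly dependent iff `c'(u) cos(φ(u) − ψ(u)) = c(u) φ'(u) sin(φ(u) − ψ(u))`. -/
theorem stmt_11 (U : Set ℝ) (hUc : U.OrdConnected)
    (c φ g ψ c' φ' g' ψ' : ℝ → ℝ)
    (hc : ∀ u ∈ U, HasDerivWithinAt c (c' u) U u)
    (hφ : ∀ u ∈ U, HasDerivWithinAt φ (φ' u) U u)
    (hgd : ∀ u ∈ U, HasDerivWithinAt g (g' u) U u)
    (hψd : ∀ u ∈ U, HasDerivWithinAt ψ (ψ' u) U u)
    (hcne : ∀ u ∈ U, c u ≠ 0) (hgne : ∀ u ∈ U, g u ≠ 0)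
    (ξ : ℝ → EuclideanSpace ℝ (Fin 2))
    (hξ : ∀ u, ξ u = c u • e2 (cos (φ u)) (sin (φ u)))
    (γ : ℝ → EuclideanSpace ℝ (Fin 2))
    (hγ : ∀ u ∈ U, HasDerivWithinAt γ (g u • e2 (-(sin (ψ u))) (cos (ψ u))) U u) :
    ∀ u ∈ U,
      HasDerivWithinAt ξ
        (c' u • e2 (cos (φ u)) (sin (φ u)) + (c u * φ' u) • e2 (-(sin (φ u))) (cos (φ u)))
        U u ∧
      (¬ LinearIndependent ℝ
          ![c' u • e2 (cos (φ u)) (sin (φ u)) + (c u * φ' u) • e2 (-(sin (φ u))) (cos (φ u)),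
            g u • e2 (-(sin (ψ u))) (cos (ψ u))] ↔
        c' u * cos (φ u - ψ u) = c u * φ' u * sin (φ u - ψ u)) := by
  intro u hu
  have e : c' u • e2 (cos (φ u)) (sin (φ u)) + (c u * φ' u) • e2 (-(sin (φ u))) (cos (φ u))
      = e2 (c' u * cos (φ u) + c u * φ' u * -(sin (φ u)))
          (c' u * sin (φ u) + c u * φ' u * cos (φ u)) := by
    ext i
    fin_cases i <;> simp [e2]
  have e' : g u • e2 (-(sin (ψ u))) (cos (ψ u))
      = e2 (g u * -(sin (ψ u))) (g u * cos (ψ u)) := by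
    ext i
    fin_cases i <;> simp [e2]
  rw [e, e']
  constructor
  · rw [aux_deriv]
    intro i
    fin_cases i
    · have h := (hc u hu).mul (hφ u hu).cos
      have hf : (fun x => ξ x 0) = c * fun x => cos (φ x) := by
        funext x
        simp [hξ, e2]
      show HasDerivWithinAt (fun x => ξ x 0) _ U u
      rw [hf]
      refine h.congr_deriv ?_
      simp [e2]
      ring
    · have h := (hc u hu).mul (hφ u hu).sin
      have hf : (fun x => ξ x 1) = c * fun x => sin (φ x) := by
        funext x
        simp [hξ, e2]
      show HasDerivWithinAt (fun x => ξ x 1) _ U u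
      rw [hf]
      refine h.congr_deriv ?_
      simp [e2]
      ring
  · rw [aux_e2, cos_sub, sin_sub]
    constructor
    · intro h
      apply mul_left_cancel₀ (hgne u hu)
      linear_combination h
    · intro h
      linear_combination g u * h
end

section
/- Let x, y : [0,a] → ℝ and f, z : [0,b] → ℝ be continuously differentiable with x(0) = f(0) = y(0) = z(0) = 0, y'(u) > 0 for all u, and z'(v) > 0 for all v. Fix t ∈ ℝ such that y'(u)² + (1 − e^{2t})·x'(u)² ≥ 0 for all u and z'(v)² + (1 − e^{−2t})·f'(v)² ≥ 0 for all v. Define σᵗ : [0,a]×[0,b] → ℝ³ by σᵗ(u,v) = ( e^{t}x(u) + e^{−t}f(v), ∫₀ᵘ √( y'(w)² + (1 − e^{2t}) x'(w)² ) dw, ∫₀ᵛ √( z'(w)² + (1 − e^{−2t}) f'(w)² ) dw ). Then for all (u,v): ‖σᵗ_u(u,v)‖² = x'(u)² + y'(u)², ⟪σᵗ_u(u,v), σᵗ_v(u,v)⟫ = x'(u)·f'(v), and ‖σᵗ_v(u,v)‖² = f'(v)² + z'(v)². In particular the first fundamental form of σᵗ coincides with that of σ⁰(u,v) = (x(u)+f(v),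 y(u), z(v)), so σᵗ is an isometric deformation of the translational T-surface σ⁰. -/
open Real Set

theorem ftc_aux (a u : ℝ) (g : ℝ → ℝ) (hg : ContinuousOn g (Icc 0 a)) (hu : u ∈ Icc 0 a) :
    HasDerivWithinAt (fun s => ∫ w in (0:ℝ)..s, g w) (g u) (Icc 0 a) u := by
  haveI : Fact (u ∈ Icc (0:ℝ) a) := ⟨hu⟩
  have hsub : Icc (0:ℝ) u ⊆ Icc 0 a := Icc_subset_Icc le_rfl hu.2
  refine intervalIntegral.integral_hasDerivWithinAt_right (t := Icc 0 a) ?_ ?_ (hg u hu)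
  · exact ContinuousOn.intervalIntegrable_of_Icc hu.1 (hg.mono hsub)
  · exact hg.stronglyMeasurableAtFilter_nhdsWithin measurableSet_Icc u

theorem e3_deriv (p q r : ℝ → ℝ) (p' q' r' u : ℝ) (s : Set ℝ)
    (hp : HasDerivWithinAt p p' s u) (hq : HasDerivWithinAt q q' s u)
    (hr : HasDerivWithinAt r r' s u) :
    HasDerivWithinAt (fun w => e3 (p w) (q w) (r w)) (e3 p' q' r') s u := by
  have h : HasDerivWithinAt (fun w => (![p w, q w, r w] : Fin 3 → ℝ)) ![p', q', r'] s u := by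
    rw [hasDerivWithinAt_pi]
    intro i
    fin_cases i <;> simpa
  exact (PiLp.continuousLinearEquiv 2 ℝ (fun _ : Fin 3 => ℝ)).symm.toContinuousLinearMap.hasFDerivAt.comp_hasDerivWithinAt u h

/-- **Theorem 5.2.** The explicit isometric deformation of a translational T-surface
`σ⁰(u,v) = (x(u)+f(v), y(u), z(v))`: the deformed surface `σᵗ` has first fundamental form
`E = x'² + y'²`, `F = x' f'`, `G = f'² + z'²`, i.e. the same as `σ⁰`. -/
theorem stmt_13 (a b : ℝ)
    (x y x' y' f z f' z' : ℝ → ℝ)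
    (hx : ∀ u ∈ Icc 0 a, HasDerivWithinAt x (x' u) (Icc 0 a) u)
    (hy : ∀ u ∈ Icc 0 a, HasDerivWithinAt y (y' u) (Icc 0 a) u)
    (hf : ∀ v ∈ Icc 0 b, HasDerivWithinAt f (f' v) (Icc 0 b) v)
    (hz : ∀ v ∈ Icc 0 b, HasDerivWithinAt z (z' v) (Icc 0 b) v)
    (hx' : ContinuousOn x' (Icc 0 a)) (hy' : ContinuousOn y' (Icc 0 a))
    (hf' : ContinuousOn f' (Icc 0 b)) (hz' : ContinuousOn z' (Icc 0 b))
    (hx0 : x 0 = 0) (hf0 : f 0 = 0) (hy0 : y 0 = 0) (hz0 : z 0 = 0)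
    (hy'pos : ∀ u ∈ Icc 0 a, 0 < y' u) (hz'pos : ∀ v ∈ Icc 0 b, 0 < z' v)
    (t : ℝ)
    (ht1 : ∀ u ∈ Icc 0 a, 0 ≤ y' u ^ 2 + (1 - Real.exp (2 * t)) * x' u ^ 2)
    (ht2 : ∀ v ∈ Icc 0 b, 0 ≤ z' v ^ 2 + (1 - Real.exp (-2 * t)) * f' v ^ 2)
    (σ : ℝ → ℝ → EuclideanSpace ℝ (Fin 3))
    (hσ : ∀ u v, σ u v =
      e3 (Real.exp t * x u + Real.exp (-t) * f v)
         (∫ w in (0:ℝ)..u, Real.sqrt (y' w ^ 2 + (1 - Real.exp (2 * t)) * x' w ^ 2))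
         (∫ w in (0:ℝ)..v, Real.sqrt (z' w ^ 2 + (1 - Real.exp (-2 * t)) * f' w ^ 2))) :
    ∀ u ∈ Icc 0 a, ∀ v ∈ Icc 0 b,
      ∃ su sv : EuclideanSpace ℝ (Fin 3),
        HasDerivWithinAt (fun u' => σ u' v) su (Icc 0 a) u ∧
        HasDerivWithinAt (fun v' => σ u v') sv (Icc 0 b) v ∧
        ‖su‖ ^ 2 = x' u ^ 2 + y' u ^ 2 ∧
        (inner ℝ su sv : ℝ) = x' u * f' v ∧
        ‖sv‖ ^ 2 = f' v ^ 2 + z' v ^ 2 := by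
  intro u hu v hv
  have e1 : Real.exp (2 * t) = Real.exp t ^ 2 := by rw [sq, ← Real.exp_add]; ring_nf
  have e2 : Real.exp (-2 * t) = Real.exp (-t) ^ 2 := by rw [sq, ← Real.exp_add]; ring_nf
  have e3' : Real.exp t * Real.exp (-t) = 1 := by rw [← Real.exp_add]; simp
  have s1 := Real.sq_sqrt (ht1 u hu)
  have s2 := Real.sq_sqrt (ht2 v hv)
  refine ⟨e3 (Real.exp t * x' u) (√(y' u ^ 2 + (1 - Real.exp (2 * t)) * x' u ^ 2)) 0,
    e3 (Real.exp (-t) * f' v) 0 (√(z' v ^ 2 + (1 - Real.exp (-2 * t)) * f' v ^ 2)),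
    ?_, ?_, ?_, ?_, ?_⟩
  · simp only [hσ]
    refine e3_deriv _ _ _ _ _ _ _ _ (((hx u hu).const_mul _).add_const _) ?_
      (hasDerivWithinAt_const _ _ _)
    refine ftc_aux a u (fun w => √(y' w ^ 2 + (1 - Real.exp (2 * t)) * x' w ^ 2)) ?_ hu
    fun_prop
  · simp only [hσ]
    refine e3_deriv _ _ _ _ _ _ _ _ (((hf v hv).const_mul _).const_add _)
      (hasDerivWithinAt_const _ _ _) ?_
    refine ftc_aux b v (fun w => √(z' w ^ 2 + (1 - Real.exp (-2 * t)) * f' w ^ 2)) ?_ hv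
    fun_prop
  · rw [EuclideanSpace.real_norm_sq_eq]
    simp only [e3, Fin.sum_univ_three]
    simp only [PiLp.toLp_apply, Matrix.cons_val]
    rw [s1, e1]; ring
  · simp only [e3, PiLp.inner_apply, Fin.sum_univ_three]
    simp
    linear_combination (x' u * f' v) * e3'
  · rw [EuclideanSpace.real_norm_sq_eq]
    simp only [e3, Fin.sum_univ_three]
    simp only [PiLp.toLp_apply, Matrix.cons_val]
    rw [s2, e2]; ring
end

section
/- Let g, ψ : [0,a] → ℝ with g continuous and ψ continuously differentiable, and let f, z : [0,b] → ℝ be continuously differentiable with z'(v) > 0 for all v. Fix t ∈ ℝ such that z'(v)² + (1 − e^{−2t})·f'(v)² ≥ 0 for all v. Define nᵗ(u) = (cos(e^tψ(u)), sin(e^tψ(u))), γᵗ(u) = ∫₀ᵘ g(w)·(−sin(e^tψ(w)), cos(e^tψ(w))) dw, zᵗ(v) = ∫₀ᵛ √( z'(w)² + (1 − e^{−2t}) f'(w)² ) dw, and σᵗ(u,v) = ( γᵗ(u) + e^{−t} f(v)·nᵗ(u), zᵗ(v) ) ∈ ℝ³. Then for all (u,v): ‖σᵗ_u(u,v)‖²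 = ( g(u) + f(v)·ψ'(u) )², ⟪σᵗ_u(u,v), σᵗ_v(u,v)⟫ = 0, and ‖σᵗ_v(u,v)‖² = f'(v)² + z'(v)². In particular the first fundamental form of σᵗ is independent of t, so the family σᵗ is an isometric deformation of the molding surface σ⁰ in the class of molding surfaces. -/
open Real Set

theorem ftc_aux_14 {c : ℝ} {h : ℝ → ℝ} (hh : ContinuousOn h (Icc 0 c)) {u : ℝ} (hu : u ∈ Icc 0 c) :
    HasDerivWithinAt (fun x => ∫ w in (0:ℝ)..x, h w) (h u) (Icc 0 c) u := by
  have hc : (0:ℝ) ≤ c := hu.1.trans hu.2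
  have hk : Continuous (IccExtend hc ((Icc 0 c).domRestrict h)) :=
    (continuousOn_iff_continuous_domRestrict.1 hh).Icc_extend'
  have e : ∀ x ∈ Icc 0 c, IccExtend hc ((Icc 0 c).domRestrict h) x = h x := by
    intro x hx
    rw [IccExtend_of_mem hc _ hx]
    rfl
  have key := (intervalIntegral.integral_hasDerivAt_right (hk.intervalIntegrable 0 u)
    (hk.stronglyMeasurableAtFilter _ _) hk.continuousAt).hasDerivWithinAt (s := Icc 0 c)
  rw [e u hu] at key
  have e2 : ∀ x ∈ Icc 0 c, (∫ w in (0:ℝ)..x, h w)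
      = ∫ w in (0:ℝ)..x, IccExtend hc ((Icc 0 c).domRestrict h) w := by
    intro x hx
    apply intervalIntegral.integral_congr
    intro w hw
    rw [uIcc_of_le hx.1] at hw
    exact (e w ⟨hw.1, hw.2.trans hx.2⟩).symm
  exact key.congr e2 (e2 u hu)

theorem e3_deriv_aux_14 {x y z : ℝ → ℝ} {x' y' z' : ℝ} {s : Set ℝ} {u : ℝ}
    (hx : HasDerivWithinAt x x' s u) (hy : HasDerivWithinAt y y' s u)
    (hz : HasDerivWithinAt z z' s u) :
    HasDerivWithinAt (fun r => e3 (x r) (y r) (z r)) (e3 x' y' z') s u := by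
  have h : HasDerivWithinAt (fun r => (![x r, y r, z r] : Fin 3 → ℝ)) ![x', y', z'] s u := by
    rw [hasDerivWithinAt_pi]
    intro i
    fin_cases i
    · simpa using hx
    · simpa using hy
    · simpa using hz
  exact ((EuclideanSpace.equiv (Fin 3) ℝ).symm.toContinuousLinearMap.hasFDerivAt
    (x := ![x u, y u, z u])).comp_hasDerivWithinAt u h

theorem e3_inner_aux_14 (x y z x' y' z' : ℝ) :
    (inner ℝ (e3 x y z) (e3 x' y' z') : ℝ) = x * x' + y * y' + z * z' := by
  simp [e3, PiLp.inner_apply, Fin.sum_univ_three]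
  ring

/-- **Theorem 5.4.** The explicit isometric deformation of a molding surface
`σ⁰(u,v) = (γ(u) + f(v)n(u), z(v))`: the deformed surface `σᵗ` has first fundamental form
`E = (g + f ψ')²`, `F = 0`, `G = f'² + z'²`, independent of `t`. -/
theorem stmt_14 (a b : ℝ)
    (g ψ ψ' f z f' z' : ℝ → ℝ)
    (hg : ContinuousOn g (Icc 0 a))
    (hψ : ∀ u ∈ Icc 0 a, HasDerivWithinAt ψ (ψ' u) (Icc 0 a) u)
    (hψ' : ContinuousOn ψ' (Icc 0 a))
    (hf : ∀ v ∈ Icc 0 b, HasDerivWithinAt f (f' v) (Icc 0 b) v)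
    (hz : ∀ v ∈ Icc 0 b, HasDerivWithinAt z (z' v) (Icc 0 b) v)
    (hf' : ContinuousOn f' (Icc 0 b)) (hz' : ContinuousOn z' (Icc 0 b))
    (hz'pos : ∀ v ∈ Icc 0 b, 0 < z' v)
    (t : ℝ)
    (ht : ∀ v ∈ Icc 0 b, 0 ≤ z' v ^ 2 + (1 - Real.exp (-2 * t)) * f' v ^ 2)
    (σ : ℝ → ℝ → EuclideanSpace ℝ (Fin 3))
    (hσ : ∀ u v, σ u v =
      e3 ((∫ w in (0:ℝ)..u, -(g w * sin (Real.exp t * ψ w))) +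
            Real.exp (-t) * f v * cos (Real.exp t * ψ u))
         ((∫ w in (0:ℝ)..u, g w * cos (Real.exp t * ψ w)) +
            Real.exp (-t) * f v * sin (Real.exp t * ψ u))
         (∫ w in (0:ℝ)..v, Real.sqrt (z' w ^ 2 + (1 - Real.exp (-2 * t)) * f' w ^ 2))) :
    ∀ u ∈ Icc 0 a, ∀ v ∈ Icc 0 b,
      ∃ su sv : EuclideanSpace ℝ (Fin 3),
        HasDerivWithinAt (fun u' => σ u' v) su (Icc 0 a) u ∧
        HasDerivWithinAt (fun v' => σ u v') sv (Icc 0 b) v ∧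
        ‖su‖ ^ 2 = (g u + f v * ψ' u) ^ 2 ∧
        (inner ℝ su sv : ℝ) = 0 ∧
        ‖sv‖ ^ 2 = f' v ^ 2 + z' v ^ 2 := by
  intro u hu v hv
  have hψc : ContinuousOn ψ (Icc 0 a) := fun x hx => (hψ x hx).continuousWithinAt
  have hθ := (hψ u hu).const_mul (Real.exp t)
  have hs : ContinuousOn (fun w => -(g w * sin (Real.exp t * ψ w))) (Icc 0 a) :=
    (hg.mul (Real.continuous_sin.comp_continuousOn (continuousOn_const.mul hψc))).neg
  have hcs : ContinuousOn (fun w => g w * cos (Real.exp t * ψ w)) (Icc 0 a) :=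
    hg.mul (Real.continuous_cos.comp_continuousOn (continuousOn_const.mul hψc))
  have hq : ContinuousOn
      (fun w => Real.sqrt (z' w ^ 2 + (1 - Real.exp (-2 * t)) * f' w ^ 2)) (Icc 0 b) :=
    ((hz'.pow 2).add (continuousOn_const.mul (hf'.pow 2))).sqrt
  have hee : Real.exp (-t) * Real.exp t = 1 := by rw [← Real.exp_add]; simp
  have he2 : Real.exp (-2 * t) = Real.exp (-t) ^ 2 := by
    rw [← Real.exp_nat_mul]; congr 1; push_cast; ring
  have hsc := Real.sin_sq_add_cos_sq (Real.exp t * ψ u)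
  have hS := Real.sq_sqrt (ht v hv)
  refine ⟨e3 (-(g u * sin (Real.exp t * ψ u)) +
        Real.exp (-t) * f v * (-sin (Real.exp t * ψ u) * (Real.exp t * ψ' u)))
      (g u * cos (Real.exp t * ψ u) +
        Real.exp (-t) * f v * (cos (Real.exp t * ψ u) * (Real.exp t * ψ' u))) 0,
    e3 (Real.exp (-t) * f' v * cos (Real.exp t * ψ u))
      (Real.exp (-t) * f' v * sin (Real.exp t * ψ u))
      (Real.sqrt (z' v ^ 2 + (1 - Real.exp (-2 * t)) * f' v ^ 2)),
    ?_, ?_, ?_, ?_, ?_⟩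
  · simp only [hσ]
    exact e3_deriv_aux_14 ((ftc_aux_14 hs hu).add (hθ.cos.const_mul _))
      ((ftc_aux_14 hcs hu).add (hθ.sin.const_mul _)) (hasDerivWithinAt_const _ _ _)
  · simp only [hσ]
    exact e3_deriv_aux_14 ((((hf v hv).const_mul _).mul_const _).const_add _)
      ((((hf v hv).const_mul _).mul_const _).const_add _) (ftc_aux_14 hq hv)
  · rw [← real_inner_self_eq_norm_sq, e3_inner_aux_14]
    have h1 : ∀ x : ℝ, Real.exp (-t) * f v * (x * (Real.exp t * ψ' u)) = f v * ψ' u * x := by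
      intro x
      linear_combination (f v * ψ' u * x) * hee
    rw [h1, h1]
    linear_combination (g u + f v * ψ' u) ^ 2 * hsc
  · rw [e3_inner_aux_14]
    ring
  · rw [← real_inner_self_eq_norm_sq, e3_inner_aux_14]
    linear_combination (Real.exp (-t) ^ 2 * f' v ^ 2) * hsc + hS - f' v ^ 2 * he2
end

section
/- Let φ : [0,a] → ℝ and f, z : [0,b] → ℝ be continuously differentiable with φ'(u) > 0 for all u and z'(v) > 0 for all v. Fix t > −1 with z'(v)² − t·f'(v)² ≥ 0 for all v. Define σᵗ(u,v) = ( √(1+t)·f(v)·cos( φ(u)/√(1+t) ), √(1+t)·f(v)·sin( φ(u)/√(1+t) ), z(0) + ∫₀ᵛ √( z'(w)² − t f'(w)² ) dw ). Then for all (u,v): ‖σᵗ_u(u,v)‖² = f(v)²·φ'(u)², ⟪σᵗ_u(u,v), σᵗ_v(u,v)⟫ = 0, and ‖σᵗ_v(u,v)‖² = f'(v)² + z'(v)². In particular the first fundamental form of σᵗ coincides with that of the surface of revolution σ⁰(u,v) = (f(v)cos φ(u), f(v)sin φ(u), z(v)), so σᵗ is an isometric deformation of σ⁰ in the class of surfaces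 of revolution. -/
open Real Set

theorem e3_hasDerivWithinAt {x y z : ℝ → ℝ} {x' y' z' : ℝ} {S : Set ℝ} {p : ℝ}
    (hx : HasDerivWithinAt x x' S p) (hy : HasDerivWithinAt y y' S p)
    (hz : HasDerivWithinAt z z' S p) :
    HasDerivWithinAt (fun q => e3 (x q) (y q) (z q)) (e3 x' y' z') S p := by
  rw [hasDerivWithinAt_iff_hasFDerivWithinAt, hasFDerivWithinAt_euclidean]
  intro i
  have key : HasDerivWithinAt (fun q => e3 (x q) (y q) (z q) i) (e3 x' y' z' i) S p := by
    fin_cases i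
    · simpa [e3] using hx
    · simpa [e3] using hy
    · simpa [e3] using hz
  refine HasFDerivWithinAt.congr_fderiv key.hasFDerivWithinAt ?_
  apply ContinuousLinearMap.ext
  intro c
  simp

/-- **Theorem 5.7.** The explicit isometric deformation of a surface of revolution
`σ⁰(u,v) = (f(v)cos φ(u), f(v)sin φ(u), z(v))` within the class of surfaces of revolution:
the deformed surface `σᵗ` has first fundamental form `E = f²φ'²`, `F = 0`,
`G = f'² + z'²`, i.e. the same as `σ⁰`. -/
theorem stmt_16 (a b : ℝ)
    (φ φ' f z f' z' : ℝ → ℝ)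
    (hφ : ∀ u ∈ Icc 0 a, HasDerivWithinAt φ (φ' u) (Icc 0 a) u)
    (hφ'c : ContinuousOn φ' (Icc 0 a))
    (hφ'pos : ∀ u ∈ Icc 0 a, 0 < φ' u)
    (hf : ∀ v ∈ Icc 0 b, HasDerivWithinAt f (f' v) (Icc 0 b) v)
    (hz : ∀ v ∈ Icc 0 b, HasDerivWithinAt z (z' v) (Icc 0 b) v)
    (hf' : ContinuousOn f' (Icc 0 b)) (hz' : ContinuousOn z' (Icc 0 b))
    (hz'pos : ∀ v ∈ Icc 0 b, 0 < z' v)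
    (t : ℝ) (ht : -1 < t)
    (htz : ∀ v ∈ Icc 0 b, 0 ≤ z' v ^ 2 - t * f' v ^ 2)
    (σ : ℝ → ℝ → EuclideanSpace ℝ (Fin 3))
    (hσ : ∀ u v, σ u v =
      e3 (Real.sqrt (1 + t) * f v * cos (φ u / Real.sqrt (1 + t)))
         (Real.sqrt (1 + t) * f v * sin (φ u / Real.sqrt (1 + t)))
         (z 0 + ∫ w in (0:ℝ)..v, Real.sqrt (z' w ^ 2 - t * f' w ^ 2))) :
    ∀ u ∈ Icc 0 a, ∀ v ∈ Icc 0 b,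
      ∃ su sv : EuclideanSpace ℝ (Fin 3),
        HasDerivWithinAt (fun u' => σ u' v) su (Icc 0 a) u ∧
        HasDerivWithinAt (fun v' => σ u v') sv (Icc 0 b) v ∧
        ‖su‖ ^ 2 = f v ^ 2 * φ' u ^ 2 ∧
        (inner ℝ su sv : ℝ) = 0 ∧
        ‖sv‖ ^ 2 = f' v ^ 2 + z' v ^ 2 := by
  intro u hu v hv
  have hs : 0 < Real.sqrt (1 + t) := Real.sqrt_pos.2 (by linarith)
  have hs2 : Real.sqrt (1 + t) ^ 2 = 1 + t := Real.sq_sqrt (by linarith)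
  set s := Real.sqrt (1 + t) with hsdef
  have hcont : ContinuousOn (fun w => Real.sqrt (z' w ^ 2 - t * f' w ^ 2)) (Icc 0 b) :=
    ((hz'.pow 2).sub (continuousOn_const.mul (hf'.pow 2))).sqrt
  have hint : HasDerivWithinAt (fun v => ∫ w in (0:ℝ)..v, Real.sqrt (z' w ^ 2 - t * f' w ^ 2))
      (Real.sqrt (z' v ^ 2 - t * f' v ^ 2)) (Icc 0 b) v := by
    have : Fact (v ∈ Icc 0 b) := ⟨hv⟩
    refine intervalIntegral.integral_hasDerivWithinAt_right (t := Icc 0 b) ?_ ?_ (hcont v hv)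
    · refine (hcont.mono ?_).intervalIntegrable
      rw [uIcc_of_le hv.1]
      exact Icc_subset_Icc_right hv.2
    · exact hcont.stronglyMeasurableAtFilter_nhdsWithin measurableSet_Icc v
  have hR : Real.sqrt (z' v ^ 2 - t * f' v ^ 2) ^ 2 = z' v ^ 2 - t * f' v ^ 2 :=
    Real.sq_sqrt (htz v hv)
  set R := Real.sqrt (z' v ^ 2 - t * f' v ^ 2) with hRdef
  have hang : HasDerivWithinAt (fun u => φ u / s) (φ' u / s) (Icc 0 a) u := (hφ u hu).div_const s
  have hsc := Real.sin_sq_add_cos_sq (φ u / s)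
  refine ⟨e3 (s * f v * (-sin (φ u / s) * (φ' u / s))) (s * f v * (cos (φ u / s) * (φ' u / s))) 0,
    e3 (s * f' v * cos (φ u / s)) (s * f' v * sin (φ u / s)) R, ?_, ?_, ?_, ?_, ?_⟩
  · simp only [hσ]
    exact e3_hasDerivWithinAt (hang.cos.const_mul (s * f v)) (hang.sin.const_mul (s * f v))
      (hasDerivWithinAt_const u (Icc 0 a) _)
  · simp only [hσ]
    exact e3_hasDerivWithinAt (((hf v hv).const_mul s).mul_const (cos (φ u / s)))
      (((hf v hv).const_mul s).mul_const (sin (φ u / s))) (hint.const_add (z 0))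
  · rw [EuclideanSpace.norm_sq_eq]
    simp [e3, Fin.sum_univ_three]
    field_simp
    linear_combination (f v ^ 2 * φ' u ^ 2) * hsc
  · simp [e3, PiLp.inner_apply, Fin.sum_univ_three]
    ring
  · rw [EuclideanSpace.norm_sq_eq]
    simp [e3, Fin.sum_univ_three]
    linear_combination (s ^ 2 * f' v ^ 2) * hsc + hR + f' v ^ 2 * hs2
end

section
/- Let U, V ⊆ ℝ be intervals and let σ(u,v) = (γ(u) + f(v)·ξ(u), z(v)) be a T-surface on U × V: γ, ξ : U → ℝ² differentiable with γ'(u) ≠ 0, ξ'(u) = λ(u)·γ'(u) for some λ : U → ℝ, 1 + f(v)λ(u) ≠ 0 for all (u,v), and f, z : V → ℝ differentiable. Assume additionally λ(u) ≠ 0 for all u and 1 + f(v) ≠ 0 for all v. Define σ̃(u,v) = ( (1 + f(v))·ξ(u), z(v) ). Then for all (u,v): σ̃_v(u,v) = σ_v(u,v), and σ̃_u(u,v) = ( (1+f(v))·λ(u) / (1+f(v)λ(u)) )·σ_u(u,v) with nonzero scalar factor. Hence σ̃ is parallel to σ, and the ground view of each profile curve of σ̃ lies on the line through the origin spanned by ξ(u),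 i.e. σ̃ is an axial T-surface parallel to σ. -/
open Real Set

theorem emb_hasDeriv {w : ℝ → EuclideanSpace ℝ (Fin 2)} {r : ℝ → ℝ}
    {w' : EuclideanSpace ℝ (Fin 2)} {r' : ℝ} {S : Set ℝ} {t : ℝ}
    (hw : HasDerivWithinAt w w' S t) (hr : HasDerivWithinAt r r' S t) :
    HasDerivWithinAt (fun s => emb (w s) (r s)) (emb w' r') S t := by
  have hwi : ∀ i, HasDerivWithinAt (fun s => w s i) (w' i) S t := fun i =>
    ((EuclideanSpace.proj i : EuclideanSpace ℝ (Fin 2) →L[ℝ] ℝ).hasFDerivAt.comp_hasDerivWithinAt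
      t hw)
  have h : HasDerivWithinAt (fun s => (![w s 0, w s 1, r s] : Fin 3 → ℝ))
      ![w' 0, w' 1, r'] S t := by
    rw [hasDerivWithinAt_pi]
    intro i
    fin_cases i
    · exact hwi 0
    · exact hwi 1
    · exact hr
  exact ((EuclideanSpace.equiv (Fin 3) ℝ).symm : (Fin 3 → ℝ) →L[ℝ] EuclideanSpace ℝ
    (Fin 3)).hasFDerivAt.comp_hasDerivWithinAt t h

/-- **Corollary to Theorem 5.9.** For a T-surface `σ(u,v) = (γ(u) + f(v)ξ(u), z(v))` with
`λ(u) ≠ 0` and `1 + f(v) ≠ 0`, the surface `σ̃(u,v) = ((1 + f(v))ξ(u), z(v))` is an axial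
T-surface parallel to `σ`: `σ̃_v = σ_v` and `σ̃_u = ((1+f)λ/(1+fλ))·σ_u` with nonzero
scalar factor. -/
theorem stmt_19 (U V : Set ℝ) (hUc : U.OrdConnected) (hVc : V.OrdConnected)
    (γ ξ γ' : ℝ → EuclideanSpace ℝ (Fin 2)) (lam : ℝ → ℝ)
    (f z f' z' : ℝ → ℝ)
    (hγ : ∀ u ∈ U, HasDerivWithinAt γ (γ' u) U u)
    (hγ'ne : ∀ u ∈ U, γ' u ≠ 0)
    (hξ : ∀ u ∈ U, HasDerivWithinAt ξ (lam u • γ' u) U u)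
    (hreg : ∀ u ∈ U, ∀ v ∈ V, 1 + f v * lam u ≠ 0)
    (hf : ∀ v ∈ V, HasDerivWithinAt f (f' v) V v)
    (hz : ∀ v ∈ V, HasDerivWithinAt z (z' v) V v)
    (hlamne : ∀ u ∈ U, lam u ≠ 0)
    (hfne : ∀ v ∈ V, 1 + f v ≠ 0)
    (σ σt : ℝ → ℝ → EuclideanSpace ℝ (Fin 3))
    (hσ : ∀ u v, σ u v = emb (γ u + f v • ξ u) (z v))
    (hσt : ∀ u v, σt u v = emb ((1 + f v) • ξ u) (z v)) :
    ∀ u ∈ U, ∀ v ∈ V,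
      HasDerivWithinAt (fun u' => σ u' v)
        (emb (γ' u + (f v * lam u) • γ' u) 0) U u ∧
      HasDerivWithinAt (fun v' => σ u v') (emb (f' v • ξ u) (z' v)) V v ∧
      HasDerivWithinAt (fun u' => σt u' v)
        (emb (((1 + f v) * lam u) • γ' u) 0) U u ∧
      -- σ̃_v = σ_v
      HasDerivWithinAt (fun v' => σt u v') (emb (f' v • ξ u) (z' v)) V v ∧
      -- σ̃_u is the stated nonzero scalar multiple of σ_u
      emb (((1 + f v) * lam u) • γ' u) 0 =
        (((1 + f v) * lam u) / (1 + f v * lam u)) • emb (γ' u + (f v * lam u) • γ' u) 0 ∧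
      ((1 + f v) * lam u) / (1 + f v * lam u) ≠ 0 := by
  intro u hu v hv
  have h1 := hreg u hu v hv
  simp only [hσ, hσt]
  refine ⟨?_, ?_, ?_, ?_, ?_, ?_⟩
  · refine emb_hasDeriv ?_ (hasDerivWithinAt_const _ _ _)
    have := (hγ u hu).add ((hξ u hu).const_smul (f v))
    rw [smul_smul] at this
    exact this
  · refine emb_hasDeriv ?_ (hz v hv)
    exact ((hf v hv).smul_const (ξ u)).const_add (γ u)
  · refine emb_hasDeriv ?_ (hasDerivWithinAt_const _ _ _)
    have := (hξ u hu).const_smul (1 + f v)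
    rw [smul_smul] at this
    exact this
  · refine emb_hasDeriv ?_ (hz v hv)
    exact ((hf v hv).const_add 1).smul_const (ξ u)
  · ext i
    fin_cases i <;> simp [emb] <;> field_simp
  · exact div_ne_zero (mul_ne_zero (hfne v hv) (hlamne u hu)) h1
end
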